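/- arXiv:2109.05727 — 4 statements merged into one kernel-verified Lean document; each statement's English description precedes it below -/
import Mathlib

section
/- Let m = 1, let c ∈ ℝ^ℓ and let U ⊆ ℝ^ℓ be a neighborhood of c. If ω(I) ≠ 0 and ĥ₀(I) ≠ 0 for some I ∈ U, where ĥ₀(I) = (2π)^{−1} ∫₀^{2π} h(I,θ;0) dθ, then the perturbed system does not have ℓ real-analytic first integrals in a neighborhood of {c} × S¹ near ε = 0 that are functionally independent for ε ≠ 0 and depend analytically on ε. Precisely: there exist no ε₀ > 0, neighborhood V of {c} × S¹ in U × S¹, and real-analytic map G : V × (−ε₀,ε₀) → ℝ^ℓ such that each component G_j(·;ε) is a first integral of the system for every ε and the differentials dG₁(·;ε),…,dG_ℓ(·;ε) are linearly independent at almost every point of V for every ε ≠ 0. -/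
open MeasureTheory Set Real

noncomputable section

/-- Vectors in ℝ^n. -/
abbrev Vec (n : ℕ) := Fin n → ℝ

section
open Filter Topology

section
open scoped ContDiff

section
open scoped NNReal ENNReal


theorem aux_local_analytic {F : Type} [NormedAddCommGroup F] [NormedSpace ℝ F] [CompleteSpace F]
    {H : ℝ × ℝ → F} {t₀ θ₀ : ℝ} (hH : AnalyticAt ℝ H (t₀, θ₀)) :
    ∃ δ > 0, ∀ a ∈ Metric.ball θ₀ δ, ∀ b ∈ Metric.ball θ₀ δ,
      AnalyticAt ℝ (fun t => ∫ θ in a..b, H (t, θ)) t₀ := by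
  obtain ⟨p, r, hp⟩ := hH
  obtain ⟨R₂, hR₂, hR₂r⟩ := ENNReal.lt_iff_exists_nnreal_btwn.1 hp.r_pos
  set R : ℝ≥0 := R₂ / 2 with hRdef
  have hR : 0 < R := by
    have : 0 < R₂ := by exact_mod_cast hR₂
    positivity
  have hRR : (R : ℝ≥0∞) + R < r := by
    have : R + R = R₂ := by rw [hRdef]; exact add_halves R₂
    calc (R : ℝ≥0∞) + R = ((R + R : ℝ≥0) : ℝ≥0∞) := by push_cast; rfl
      _ = R₂ := by rw [this]
      _ < r := hR₂r
  have hRrad : (R : ℝ≥0∞) + R < p.radius := hRR.trans_le hp.r_le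
  have hRrad1 : (R : ℝ≥0∞) < p.radius := lt_of_le_of_lt le_self_add hRrad
  refine ⟨R, by exact_mod_cast hR, fun a ha b hb => ?_⟩
  have hsub : ∀ θ ∈ uIoc a b, |θ - θ₀| < R := by
    intro θ hθ
    have : θ ∈ Metric.ball θ₀ (R:ℝ) :=
      (convex_ball θ₀ (R:ℝ)).ordConnected.uIcc_subset ha hb (uIoc_subset_uIcc hθ)
    simpa [Real.dist_eq] using this
  set c : ℕ → ℝ → F := fun n θ => p.changeOrigin ((0:ℝ), θ - θ₀) n (fun _ => ((1:ℝ), (0:ℝ))) with hc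
  set B : ℕ → ℝ≥0 := fun n => ∑' s : Σ l : ℕ, { s : Finset (Fin (n + l)) // s.card = l },
    ‖p (n + s.1)‖₊ * R ^ s.1 with hB
  have hnn : ∀ θ ∈ uIoc a b, ‖((0:ℝ), θ - θ₀)‖₊ ≤ R := by
    intro θ hθ
    have := hsub θ hθ
    rw [← NNReal.coe_le_coe, coe_nnnorm, Prod.norm_def]
    simpa using this.le
  have hcB : ∀ n, ∀ θ ∈ uIoc a b, ‖c n θ‖ ≤ B n := by
    intro n θ hθ
    have h1 : ‖c n θ‖ ≤ ‖p.changeOrigin ((0:ℝ), θ - θ₀) n‖ := by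
      refine (ContinuousMultilinearMap.le_opNorm _ _).trans ?_
      simp [Prod.norm_def]
    have h2 : ‖p.changeOrigin ((0:ℝ), θ - θ₀) n‖₊ ≤ B n := by
      refine (p.nnnorm_changeOrigin_le n (lt_of_le_of_lt (by exact_mod_cast hnn θ hθ) hRrad1)).trans ?_
      have hs2 := p.changeOriginSeries_summable_aux₂ hRrad1 n
      refine Summable.tsum_le_tsum (fun s => ?_) (NNReal.summable_of_le (fun s => ?_) hs2) hs2
      · gcongr; exact hnn θ hθ
      · gcongr; exact hnn θ hθ
    exact h1.trans (by exact_mod_cast h2)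
  have hBsum : Summable fun n => B n * R ^ n := by
    have := (NNReal.summable_sigma.1 (p.changeOriginSeries_summable_aux₁ hRrad)).2
    simpa only [NNReal.tsum_mul_right] using this
  have hBsum' : Summable fun n => (B n : ℝ) * (R:ℝ) ^ n := by exact_mod_cast hBsum
  have hcont : ∀ n, AEStronglyMeasurable (c n) (volume.restrict (uIoc a b)) := by
    intro n
    refine ContinuousOn.aestronglyMeasurable ?_ measurableSet_uIoc
    have h1 := (p.hasFPowerSeriesOnBall_changeOrigin n (lt_of_le_of_lt (by simp) hRrad1)).continuousOn
    have h2 : ContinuousOn (fun θ => p.changeOrigin ((0:ℝ), θ - θ₀) n) (uIoc a b) := by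
      refine h1.comp (by fun_prop) fun θ hθ => ?_
      rw [mem_eball_zero_iff]
      exact lt_of_le_of_lt (by exact_mod_cast hnn θ hθ) hRrad1
    exact (continuous_eval_const (F := ContinuousMultilinearMap ℝ (fun _ : Fin n => ℝ × ℝ) F) (fun _ => ((1:ℝ), (0:ℝ)))).comp_continuousOn h2
  let q : FormalMultilinearSeries ℝ ℝ F :=
    fun n => ContinuousMultilinearMap.mkPiRing ℝ (Fin n) (∫ θ in a..b, c n θ)
  have hps : HasFPowerSeriesAt (fun t => ∫ θ in a..b, H (t, θ)) q t₀ := by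
    refine hasFPowerSeriesAt_iff.2 ?_
    have hRpos : (0:ℝ) < R := by exact_mod_cast hR
    filter_upwards [Metric.ball_mem_nhds (0:ℝ) hRpos] with z hz
    have hz' : |z| < R := by simpa using hz
    have hco : ∀ n, q.coeff n = ∫ θ in a..b, c n θ := by
      intro n
      simp [q, FormalMultilinearSeries.coeff]
    simp_rw [hco, ← intervalIntegral.integral_smul]
    have hbd : ∀ n, ∀ θ ∈ uIoc a b, ‖z ^ n • c n θ‖ ≤ B n * (R:ℝ) ^ n := by
      intro n θ hθ
      rw [norm_smul, mul_comm, norm_pow, Real.norm_eq_abs]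
      gcongr
      exact hcB n θ hθ
    refine intervalIntegral.hasSum_integral_of_dominated_convergence
      (fun n _ => B n * (R:ℝ) ^ n) ?_ ?_ ?_ ?_ ?_
    · exact fun n => (hcont n).const_smul _
    · exact fun n => Eventually.of_forall fun θ hθ => hbd n θ hθ
    · exact Eventually.of_forall fun θ hθ => hBsum'
    · simp
    · refine Eventually.of_forall fun θ hθ => ?_
      have h1 := hp.changeOrigin (y := ((0:ℝ), θ - θ₀))
        (lt_of_le_of_lt (by exact_mod_cast hnn θ hθ) (lt_of_le_of_lt le_self_add hRR))
      have h2 := h1.hasSum (y := (z, (0:ℝ))) (by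
        rw [mem_eball_zero_iff, lt_tsub_iff_right]
        refine lt_of_le_of_lt (add_le_add (b := (R:ℝ≥0∞)) (d := (R:ℝ≥0∞)) ?_ ?_) hRR
        · have : ‖(z, (0:ℝ))‖₊ ≤ R := by
            rw [← NNReal.coe_le_coe, coe_nnnorm, Prod.norm_def]
            simpa using hz'.le
          exact_mod_cast this
        · exact_mod_cast hnn θ hθ)
      convert h2 using 1
      · ext n
        have : (fun _ : Fin n => (z, (0:ℝ))) = fun _ => z • ((1:ℝ), (0:ℝ)) := by ext <;> simp
        rw [this, ContinuousMultilinearMap.map_smul_univ]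
        simp [hc]
      · simp
  exact ⟨_, hps⟩

theorem aux_integral_analytic {F : Type} [NormedAddCommGroup F] [NormedSpace ℝ F] [CompleteSpace F]
    {H : ℝ × ℝ → F} (hH : AnalyticOnNhd ℝ H univ) (L : ℝ) :
    AnalyticOnNhd ℝ (fun t => ∫ θ in (0:ℝ)..L, H (t, θ)) univ := by
  intro t₀ _
  have hcont : Continuous H := by
    rw [← continuousOn_univ]; exact hH.continuousOn
  have hint : ∀ t a b, IntervalIntegrable (fun θ => H (t, θ)) volume a b := by
    intro t a b
    exact (hcont.comp (by fun_prop)).intervalIntegrable _ _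
  set S : Set ℝ := {b | AnalyticAt ℝ (fun t => ∫ θ in (0:ℝ)..b, H (t, θ)) t₀} with hS
  have key : ∀ b₀, ∃ δ > 0, ∀ b ∈ Metric.ball b₀ δ, (b₀ ∈ S ↔ b ∈ S) := by
    intro b₀
    obtain ⟨δ, hδ, h⟩ := aux_local_analytic (hH (t₀, b₀) trivial)
    refine ⟨δ, hδ, fun b hb => ⟨fun h1 => ?_, fun h1 => ?_⟩⟩
    · have := h1.add (h b₀ (Metric.mem_ball_self hδ) b hb)
      refine this.congr (Eventually.of_forall fun t => ?_)
      exact intervalIntegral.integral_add_adjacent_intervals (hint _ _ _) (hint _ _ _)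
    · have := h1.add (h b hb b₀ (Metric.mem_ball_self hδ))
      refine this.congr (Eventually.of_forall fun t => ?_)
      exact intervalIntegral.integral_add_adjacent_intervals (hint _ _ _) (hint _ _ _)
  have hclopen : IsClopen S := by
    constructor
    · rw [← isOpen_compl_iff, Metric.isOpen_iff]
      intro b₀ hb₀
      obtain ⟨δ, hδ, h⟩ := key b₀
      exact ⟨δ, hδ, fun b hb hbS => hb₀ ((h b hb).2 hbS)⟩
    · rw [Metric.isOpen_iff]
      intro b₀ hb₀
      obtain ⟨δ, hδ, h⟩ := key b₀
      exact ⟨δ, hδ, fun b hb => (h b hb).1 hb₀⟩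
  have h0 : (0:ℝ) ∈ S := by
    simp only [hS, mem_ofPred_eq, intervalIntegral.integral_same]
    exact analyticAt_const
  have := hclopen.eq_univ ⟨0, h0⟩
  have hL : L ∈ S := by rw [this]; trivial
  exact hL

end


theorem aux_bound {E F : Type} [NormedAddCommGroup E] [NormedSpace ℝ E] [FiniteDimensional ℝ E]
    [NormedAddCommGroup F] [NormedSpace ℝ F] {V : Set E} (hV : IsOpen V)
    {H : E × ℝ → F} (hH : ContinuousOn H (V ×ˢ Ioo (-1:ℝ) 2)) {x₀ : E} (hx : x₀ ∈ V) :
    ∃ C : ℝ, ∃ s ∈ 𝓝 x₀, s ⊆ V ∧ ∀ x ∈ s, ∀ t ∈ uIoc (0:ℝ) 1, ‖H (x, t)‖ ≤ C := by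
  have : ProperSpace E := FiniteDimensional.proper_real E
  obtain ⟨r, hr, hrV⟩ := Metric.nhds_basis_closedBall.mem_iff.1 (hV.mem_nhds hx)
  have hc : IsCompact (Metric.closedBall x₀ r ×ˢ Icc (0:ℝ) 1) :=
    (isCompact_closedBall x₀ r).prod isCompact_Icc
  have hsub : Metric.closedBall x₀ r ×ˢ Icc (0:ℝ) 1 ⊆ V ×ˢ Ioo (-1:ℝ) 2 := by
    apply prod_mono hrV
    intro t ht
    exact ⟨by linarith [ht.1], by linarith [ht.2]⟩
  obtain ⟨C, hC⟩ := hc.exists_bound_of_continuousOn (hH.mono hsub)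
  refine ⟨C, Metric.closedBall x₀ r, Metric.closedBall_mem_nhds _ hr, hrV, fun x hx t ht => ?_⟩
  rw [uIoc_of_le zero_le_one] at ht
  exact hC (x, t) ⟨hx, ht.1.le, ht.2⟩

theorem aux_slice {E F : Type} [NormedAddCommGroup E] [NormedSpace ℝ E]
    [NormedAddCommGroup F] [NormedSpace ℝ F] {V : Set E}
    {H : E × ℝ → F} (hH : ContinuousOn H (V ×ˢ Ioo (-1:ℝ) 2)) {x₀ : E} (hx : x₀ ∈ V) :
    ContinuousOn (fun t => H (x₀, t)) (uIcc (0:ℝ) 1) := by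
  rw [uIcc_of_le zero_le_one]
  refine hH.comp (by fun_prop) ?_
  intro t ht
  exact ⟨hx, by linarith [ht.1], by linarith [ht.2]⟩

theorem aux_param_cont {E F : Type} [NormedAddCommGroup E] [NormedSpace ℝ E] [FiniteDimensional ℝ E]
    [NormedAddCommGroup F] [NormedSpace ℝ F] {V : Set E} (hV : IsOpen V)
    {H : E × ℝ → F} (hH : ContinuousOn H (V ×ˢ Ioo (-1:ℝ) 2)) :
    ContinuousOn (fun x => ∫ s in (0:ℝ)..1, H (x, s)) V := by
  intro x₀ hx
  apply ContinuousAt.continuousWithinAt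
  obtain ⟨C, s, hs, hsV, hC⟩ := aux_bound hV hH hx
  refine intervalIntegral.continuousAt_of_dominated_interval (bound := fun _ => C) ?_ ?_ ?_ ?_
  · filter_upwards [hs] with x hx
    exact ((aux_slice hH (hsV hx)).mono uIoc_subset_uIcc).aestronglyMeasurable measurableSet_uIoc
  · filter_upwards [hs] with x hx
    exact Eventually.of_forall fun t ht => hC x hx t ht
  · simp
  · refine Eventually.of_forall fun t ht => ?_
    rw [uIoc_of_le zero_le_one] at ht
    have : ContinuousAt H (x₀, t) := hH.continuousAt
      ((hV.prod isOpen_Ioo).mem_nhds ⟨hx, by linarith [ht.1], by linarith [ht.2]⟩)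
    exact ContinuousAt.comp (f := fun x => (x, t)) this (by fun_prop)

theorem aux_param_contDiff {E : Type} [NormedAddCommGroup E] [NormedSpace ℝ E]
    [FiniteDimensional ℝ E] {V : Set E} (hV : IsOpen V) (n : ℕ) :
    ∀ {F : Type} [NormedAddCommGroup F] [NormedSpace ℝ F]
    {H : E × ℝ → F} (_ : ContDiffOn ℝ n H (V ×ˢ Ioo (-1:ℝ) 2)),
    ContDiffOn ℝ n (fun x => ∫ s in (0:ℝ)..1, H (x, s)) V := by
  induction n with
  | zero =>
    intro F _ _ H hH
    simp only [Nat.cast_zero, contDiffOn_zero] at hH ⊢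
    exact aux_param_cont hV hH
  | succ n ih =>
    intro F _ _ H hH
    have hop : IsOpen (V ×ˢ Ioo (-1:ℝ) 2) := hV.prod isOpen_Ioo
    push_cast at hH ⊢
    have hH1 := (contDiffOn_succ_iff_fderiv_of_isOpen hop).1 hH
    set H' : E × ℝ → (E →L[ℝ] F) := fun z => (fderiv ℝ H z).comp (ContinuousLinearMap.inl ℝ E ℝ)
      with hH'
    have hH'c : ContDiffOn ℝ n H' (V ×ˢ Ioo (-1:ℝ) 2) := hH1.2.2.clm_comp contDiffOn_const
    have key : ∀ x₀ ∈ V, HasFDerivAt (fun x => ∫ s in (0:ℝ)..1, H (x, s))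
        (∫ s in (0:ℝ)..1, H' (x₀, s)) x₀ := by
      intro x₀ hx
      obtain ⟨C, s, hs, hsV, hC⟩ := aux_bound hV hH'c.continuousOn hx
      refine intervalIntegral.hasFDerivAt_integral_of_dominated_of_fderiv_le
        (F := fun x s => H (x, s)) (F' := fun x s => H' (x, s)) (bound := fun _ => C) hs ?_ ?_ ?_ ?_ ?_ ?_
      · filter_upwards [hs] with x hx
        exact ((aux_slice hH.continuousOn (hsV hx)).mono uIoc_subset_uIcc).aestronglyMeasurable
          measurableSet_uIoc
      · exact (aux_slice hH.continuousOn hx).intervalIntegrable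
      · exact ((aux_slice hH'c.continuousOn hx).mono uIoc_subset_uIcc).aestronglyMeasurable
          measurableSet_uIoc
      · exact Eventually.of_forall fun t ht x hx => hC x hx t ht
      · simp
      · refine Eventually.of_forall fun t ht x hx => ?_
        rw [uIoc_of_le zero_le_one] at ht
        have : DifferentiableAt ℝ H (x, t) := hH1.1.differentiableAt
          (hop.mem_nhds ⟨hsV hx, by linarith [ht.1], by linarith [ht.2]⟩)
        exact this.hasFDerivAt.comp x (hasFDerivAt_prodMk_left x t)
    refine (contDiffOn_succ_iff_fderiv_of_isOpen hV).2 ⟨fun x hx =>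
      (key x hx).differentiableAt.differentiableWithinAt, by simp, ?_⟩
    exact (ih hH'c).congr fun x hx => (key x hx).fderiv

/-- Hadamard quotient. -/
noncomputable def hq {Z : Type} [NormedAddCommGroup Z] [NormedSpace ℝ Z] (K : Z × ℝ → ℝ) (z : Z × ℝ) : ℝ :=
  if z.2 = 0 then fderiv ℝ K z (0, 1) else K z / z.2

theorem hq_contDiffAt {Z : Type} [NormedAddCommGroup Z] [NormedSpace ℝ Z] [FiniteDimensional ℝ Z]
    {K : Z × ℝ → ℝ} {z₀ : Z} {n : ℕ} (hK1 : ContDiffAt ℝ ((n:ℕ∞ω) + 1) K (z₀, 0))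
    (h0 : ∀ᶠ z in 𝓝 z₀, K (z, 0) = 0) :
    ContDiffAt ℝ n (hq K) (z₀, 0) := by
  have hK2 := hK1.eventually (by exact_mod_cast WithTop.coe_ne_top)
  rw [nhds_prod_eq] at hK2
  obtain ⟨r, hr, hball⟩ := Metric.eventually_nhds_iff_ball.1 (nhds_prod_eq (x := z₀) (y := (0:ℝ)) ▸ hK2)
  obtain ⟨r', hr', hball'⟩ := Metric.eventually_nhds_iff_ball.1 h0
  set ρ := min r r' with hρ
  have hρ0 : 0 < ρ := lt_min hr hr'
  have hin : ∀ z ∈ Metric.ball z₀ ρ, ∀ e : ℝ, |e| < ρ → ContDiffAt ℝ ((n:ℕ∞ω) + 1) K (z, e) := by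
    intro z hz e he
    apply hball
    rw [← ball_prod_same]
    refine ⟨Metric.ball_subset_ball (min_le_left _ _) hz, ?_⟩
    simpa using he.trans_le (min_le_left _ _)
  set V : Set (Z × ℝ) := Metric.ball z₀ ρ ×ˢ Metric.ball (0:ℝ) (ρ / 2) with hVdef
  have hV : IsOpen V := Metric.isOpen_ball.prod Metric.isOpen_ball
  have habs : ∀ e ∈ Metric.ball (0:ℝ) (ρ/2), ∀ s ∈ Ioo (-1:ℝ) 2, |s * e| < ρ := by
    intro e he s hs
    rw [abs_mul]
    have h1 : |s| < 2 := abs_lt.2 ⟨by linarith [hs.1], hs.2⟩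
    have h2 : |e| < ρ / 2 := by simpa using he
    nlinarith [abs_nonneg s, abs_nonneg e]
  have hH : ContDiffOn ℝ n (fun w : (Z × ℝ) × ℝ => fderiv ℝ K (w.1.1, w.2 * w.1.2) ((0:Z), (1:ℝ)))
      (V ×ˢ Ioo (-1:ℝ) 2) := by
    rintro ⟨⟨z, e⟩, s⟩ ⟨⟨hz, he⟩, hs⟩
    apply ContDiffAt.contDiffWithinAt
    have h1 := (hin z hz (s * e) (habs e he s hs)).fderiv_right (m := n) le_rfl
    refine ContDiffAt.clm_apply ?_ contDiffAt_const
    exact ContDiffAt.comp (g := fderiv ℝ K) (f := fun w : (Z × ℝ) × ℝ => (w.1.1, w.2 * w.1.2))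
      ((z, e), s) h1 (by fun_prop)
  have := (aux_param_contDiff hV n hH).contDiffAt (x := (z₀, 0))
    (hV.mem_nhds ⟨Metric.mem_ball_self hρ0, Metric.mem_ball_self (by positivity)⟩)
  refine this.congr_of_eventuallyEq ?_
  filter_upwards [hV.mem_nhds (x := (z₀, (0:ℝ)))
    ⟨Metric.mem_ball_self hρ0, Metric.mem_ball_self (by positivity)⟩]
  rintro ⟨z, e⟩ ⟨hz, he⟩
  have hz0 : K (z, 0) = 0 := hball' z (Metric.ball_subset_ball (min_le_right _ _) hz)
  by_cases h : e = 0
  · simp [hq, h]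
  · simp only [hq, h, if_false]
    have hder : ∀ s ∈ uIcc (0:ℝ) 1, HasDerivAt (fun s => K (z, s * e) / e)
        (fderiv ℝ K (z, s * e) ((0:Z), (1:ℝ))) s := by
      intro s hs
      rw [uIcc_of_le zero_le_one] at hs
      have hs' : s ∈ Ioo (-1:ℝ) 2 := ⟨by linarith [hs.1], by linarith [hs.2]⟩
      have h1 := ((hin z hz (s * e) (habs e he s hs')).differentiableAt (by simp)).hasFDerivAt
      have h2 : HasDerivAt (fun s : ℝ => (z, s * e)) ((0:Z), e) s := by
        have := (hasDerivAt_const s z).prodMk ((hasDerivAt_id s).mul_const e)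
        simpa using this
      have h3 := (h1.comp_hasDerivAt s h2).div_const e
      have h4 : ((0:Z), e) = e • ((0:Z), (1:ℝ)) := by simp
      have h5 : fderiv ℝ K (z, s * e) ((0:Z), e) / e = fderiv ℝ K (z, s * e) ((0:Z), (1:ℝ)) := by
        rw [h4, map_smul, smul_eq_mul]
        field_simp
      rw [h5] at h3
      exact h3
    rw [intervalIntegral.integral_eq_sub_of_hasDerivAt hder]
    · simp [hz0]
    · have := aux_slice hH.continuousOn (x₀ := (z, e)) ⟨hz, he⟩
      exact this.intervalIntegrable

theorem aux_func_dep {ι E : Type} [Fintype ι] [NormedAddCommGroup E] [NormedSpace ℝ E]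
    [FiniteDimensional ℝ E] {n : ℕ} (hn : 1 ≤ n) {f : E → (ι → ℝ)} {u : E → ℝ} {x₁ : E}
    (hf : ContDiffAt ℝ n f x₁) (hu : ContDiffAt ℝ n u x₁)
    (hsurj : (fderiv ℝ f x₁).range = ⊤)
    (hker : ∀ᶠ x in 𝓝 x₁, ∀ v, fderiv ℝ f x v = 0 → fderiv ℝ u x v = 0) :
    ∃ φ : (ι → ℝ) → ℝ, ContDiffAt ℝ n φ (f x₁) ∧ ∀ᶠ x in 𝓝 x₁, u x = φ (f x) := by
  have : CompleteSpace E := FiniteDimensional.complete ℝ E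
  have hn0' : (n : ℕ∞ω) ≠ 0 := by exact_mod_cast (by omega : n ≠ 0)
  have hstrict : HasStrictFDerivAt f (fderiv ℝ f x₁) x₁ := hf.hasStrictFDerivAt hn0'
  have hcomp : (fderiv ℝ f x₁).ker.ClosedComplemented :=
    Submodule.ClosedComplemented.of_finiteDimensional _
  set D := hstrict.implicitFunctionDataOfComplemented f (fderiv ℝ f x₁) hsurj hcomp with hD
  have hpt : D.pt = x₁ := rfl
  have hleft : D.leftFun = f := rfl
  have hgc : ContDiff ℝ n D.rightFun := by
    have : D.rightFun = fun x => Classical.choose hcomp (x - x₁) := rfl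
    rw [this]; fun_prop
  set g := D.rightFun with hg
  set ψ := D.implicitFunction.uncurry with hψ
  have hψc : ContDiffAt ℝ n ψ (f x₁, g x₁) :=
    ImplicitFunctionData.contDiffAt_implicitFunction (φ := D) hf hgc.contDiffAt hn0'
  have hr : ∀ᶠ p in 𝓝 (f x₁, g x₁), f (ψ p) = p.1 := D.leftFun_implicitFunction
  have hl : ∀ᶠ x in 𝓝 x₁, ψ (f x, g x) = x := D.implicitFunction_apply_image
  have hψ1 : ψ (f x₁, g x₁) = x₁ := hl.self_of_nhds
  have hlt : (1 : ℕ∞ω) ≤ n := by exact_mod_cast hn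
  have hn0 : (n : ℕ∞ω) ≠ 0 := by exact_mod_cast (by omega : n ≠ 0)
  have hdf : ∀ᶠ x in 𝓝 x₁, DifferentiableAt ℝ f x :=
    ((hf.of_le hlt).eventually (by simp)).mono fun x hx => hx.differentiableAt (by simp)
  have hdu : ∀ᶠ x in 𝓝 x₁, DifferentiableAt ℝ u x :=
    ((hu.of_le hlt).eventually (by simp)).mono fun x hx => hx.differentiableAt (by simp)
  have hdψ : ∀ᶠ p in 𝓝 (f x₁, g x₁), DifferentiableAt ℝ ψ p :=
    ((hψc.of_le hlt).eventually (by simp)).mono fun x hx => hx.differentiableAt (by simp)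
  have htend : Tendsto ψ (𝓝 (f x₁, g x₁)) (𝓝 x₁) := by
    have := hψc.continuousAt.tendsto
    rwa [hψ1] at this
  have hall : ∀ᶠ p in 𝓝 (f x₁, g x₁), (∀ᶠ q in 𝓝 p, f (ψ q) = q.1) ∧ DifferentiableAt ℝ ψ p ∧
      DifferentiableAt ℝ f (ψ p) ∧ DifferentiableAt ℝ u (ψ p) ∧
      ∀ v, fderiv ℝ f (ψ p) v = 0 → fderiv ℝ u (ψ p) v = 0 := by
    filter_upwards [hr.eventually_nhds, hdψ, htend.eventually hdf, htend.eventually hdu,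
      htend.eventually hker] with p h1 h2 h3 h4 h5
    exact ⟨h1, h2, h3, h4, h5⟩
  obtain ⟨r, hr0, hball⟩ := Metric.eventually_nhds_iff_ball.1 hall
  rw [← ball_prod_same] at hball
  refine ⟨fun y => u (ψ (y, g x₁)), ?_, ?_⟩
  · have h1 : ContDiffAt ℝ n u (ψ (f x₁, g x₁)) := by rw [hψ1]; exact hu
    exact ContDiffAt.comp (f x₁) (f := fun y => ψ (y, g x₁)) h1
      (ContDiffAt.comp (f x₁) (f := fun y => (y, g x₁)) hψc (by fun_prop))
  · filter_upwards [hl, hf.continuousAt.eventually (Metric.ball_mem_nhds _ hr0),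
      hgc.continuous.continuousAt.eventually (Metric.ball_mem_nhds _ hr0)] with x hx hfx hgx
    have hconst : ∀ w ∈ Metric.ball (g x₁) r, HasFDerivAt (fun w => u (ψ (f x, w)))
        (0 : _ →L[ℝ] ℝ) w := by
      intro w hw
      obtain ⟨h1, h2, h3, h4, h5⟩ := hball (f x, w) ⟨hfx, hw⟩
      have hin : HasFDerivAt (fun w => ψ (f x, w))
          ((fderiv ℝ ψ (f x, w)).comp (ContinuousLinearMap.inr ℝ _ _)) w :=
        h2.hasFDerivAt.comp w (hasFDerivAt_prodMk_right (f x) w)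
      have hcomp := h4.hasFDerivAt.comp w hin
      have hz : (fderiv ℝ u (ψ (f x, w))).comp ((fderiv ℝ ψ (f x, w)).comp
          (ContinuousLinearMap.inr ℝ _ _)) = 0 := by
        refine ContinuousLinearMap.ext fun v => ?_
        apply h5
        have hf1 := (h3.hasFDerivAt.comp (f x, w) h2.hasFDerivAt)
        have hf2 : HasFDerivAt (f ∘ ψ) (ContinuousLinearMap.fst ℝ (ι → ℝ) _) (f x, w) :=
          hasFDerivAt_fst.congr_of_eventuallyEq h1
        have := hf1.unique hf2
        have h6 := DFunLike.congr_fun this (0, v)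
        simpa using h6
      rw [hz] at hcomp
      exact hcomp
    have := (Metric.isOpen_ball (x := g x₁) (ε := r)).is_const_of_fderiv_eq_zero
      (convex_ball _ _).isPreconnected
      (f := fun w => u (ψ (f x, w))) (𝕜 := ℝ)
      (fun w hw => (hconst w hw).differentiableAt.differentiableWithinAt)
      (fun w hw => (hconst w hw).fderiv) hgx (Metric.mem_ball_self hr0)
    simp only [hx] at this
    exact this

theorem aux_surj {ι E : Type} [Fintype ι] [NormedAddCommGroup E] [NormedSpace ℝ E]
    {v : ι → (E →L[ℝ] ℝ)} (hv : LinearIndependent ℝ v) :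
    (ContinuousLinearMap.pi v).range = ⊤ := by
  classical
  by_contra hne
  obtain ⟨φ, φ0, hφ⟩ := Submodule.exists_le_ker_of_lt_top _ (lt_top_iff_ne_top.2 hne)
  apply φ0
  have key : ∀ y : ι → ℝ, φ y = ∑ i, φ (Pi.single i 1) * y i := by
    intro y
    conv_lhs => rw [← Finset.univ_sum_single y]
    rw [map_sum]
    refine Finset.sum_congr rfl fun i _ => ?_
    have : Pi.single i (y i) = y i • (Pi.single i (1:ℝ) : ι → ℝ) := by
      rw [← Pi.single_smul]; simp
    rw [this, map_smul, smul_eq_mul, mul_comm]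
  have h0 : ∑ i, φ (Pi.single i 1) • v i = 0 := by
    ext x
    have h1 : φ (ContinuousLinearMap.pi v x) = 0 := hφ ⟨x, rfl⟩
    rw [key] at h1
    simpa using h1
  have h2 := Fintype.linearIndependent_iff.1 hv _ h0
  ext i
  simpa using h2 i

theorem func_dep {ℓ n : ℕ} (hn : 1 ≤ n) {W : Set (Fin ℓ → ℝ)} (hW : IsOpen W) (hne : W.Nonempty)
    {F : Fin ℓ → (Fin ℓ → ℝ) → ℝ} (hF : ∀ j, ∀ x ∈ W, ContDiffAt ℝ n (F j) x)
    (hdep : ∀ x ∈ W, ¬ LinearIndependent ℝ (fun j => fderiv ℝ (F j) x)) :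
    ∃ x₁ ∈ W, ∃ S : Finset (Fin ℓ), ∃ j ∉ S, ∃ φ : (S → ℝ) → ℝ,
      ContDiffAt ℝ n φ (fun i => F i x₁) ∧ ∀ᶠ x in 𝓝 x₁, F j x = φ (fun i => F i x) := by
  classical
  have hlt : (1 : ℕ∞ω) ≤ n := by exact_mod_cast hn
  have hn0 : (n : ℕ∞ω) ≠ 0 := by exact_mod_cast (by omega : n ≠ 0)
  set T : Finset (Finset (Fin ℓ)) := Finset.univ.filter fun S =>
    ∃ x ∈ W, LinearIndepOn ℝ (fun j => fderiv ℝ (F j) x) (S : Set (Fin ℓ)) with hT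
  have hTne : T.Nonempty := by
    obtain ⟨x, hx⟩ := hne
    refine ⟨∅, ?_⟩
    simp only [hT, Finset.mem_filter, Finset.mem_univ, true_and]
    exact ⟨x, hx, by simp⟩
  obtain ⟨S, hST, hmax⟩ := Finset.exists_max_image T Finset.card hTne
  simp only [hT, Finset.mem_filter, Finset.mem_univ, true_and] at hST hmax
  obtain ⟨x₁, hx₁, hS⟩ := hST
  have hSu : S ≠ Finset.univ := by
    rintro rfl
    apply hdep x₁ hx₁
    rw [Finset.coe_univ, linearIndepOn_univ_iff] at hS
    exact hS
  obtain ⟨j, hj⟩ : ∃ j, j ∉ S := by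
    by_contra! h
    exact hSu (Finset.eq_univ_iff_forall.2 h)
  refine ⟨x₁, hx₁, S, j, hj, ?_⟩
  have hd : ∀ i, ∀ x ∈ W, DifferentiableAt ℝ (F i) x := fun i x hx =>
    (hF i x hx).differentiableAt hn0
  have hfd : ∀ x ∈ W, fderiv ℝ (fun x (i : S) => F i x) x =
      ContinuousLinearMap.pi fun i : S => fderiv ℝ (F i) x := fun x hx =>
    fderiv_pi fun i => hd i x hx
  refine aux_func_dep hn (f := fun x (i : S) => F i x) (u := F j) (x₁ := x₁) ?_ (hF j x₁ hx₁) ?_ ?_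
  · rw [contDiffAt_pi]
    exact fun i => hF i x₁ hx₁
  · rw [hfd x₁ hx₁]
    exact aux_surj hS
  · have hcont : ContinuousAt (fun x => fun i : S => fderiv ℝ (F i) x) x₁ := by
      rw [continuousAt_pi]
      exact fun i => ((hF i x₁ hx₁).of_le hlt).fderiv_right (m := 0) (by simp) |>.continuousAt
    have hev := hcont.eventually (LinearIndependent.eventually (𝕜 := ℝ) hS)
    filter_upwards [hev, hW.mem_nhds hx₁] with x hx hxW v hv
    have hspan : fderiv ℝ (F j) x ∈ Submodule.span ℝ ((fun j => fderiv ℝ (F j) x) '' (S : Set (Fin ℓ))) := by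
      by_contra hns
      have h1 : LinearIndepOn ℝ (fun j => fderiv ℝ (F j) x) (insert j (S : Set (Fin ℓ))) :=
        LinearIndepOn.insert hx hns
      have h2 := hmax (insert j S) ⟨x, hxW, by rw [Finset.coe_insert]; exact h1⟩
      rw [Finset.card_insert_of_notMem hj] at h2
      omega
    rw [hfd x hxW] at hv
    refine Submodule.span_induction (p := fun L _ => L v = 0) ?_ ?_ ?_ ?_ hspan
    · rintro _ ⟨i, hi, rfl⟩
      exact congr_fun hv ⟨i, hi⟩
    · simp
    · intro a b _ _ ha hb; simp [ha, hb]
    · intro c a _ ha; simp [ha]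

end


/-- The angle window. -/
def Om : Set ℝ := Ioo (-1) (2 * π + 1)

/-- The extended vector field. -/
def XF {ℓ : ℕ} (h : Vec ℓ → ℝ → ℝ → Vec ℓ) (ω : Vec ℓ → ℝ) (g : Vec ℓ → ℝ → ℝ → ℝ)
    (z : (Vec ℓ × ℝ) × ℝ) : (Vec ℓ × ℝ) × ℝ :=
  ((z.2 • h z.1.1 z.1.2 z.2, ω z.1.1 + z.2 * g z.1.1 z.1.2 z.2), 0)

/-- A family of integrals near ε = 0. -/
structure Good {ℓ : ℕ} (h : Vec ℓ → ℝ → ℝ → Vec ℓ) (ω : Vec ℓ → ℝ) (g : Vec ℓ → ℝ → ℝ → ℝ)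
    (n : ℕ) (W : Set (Vec ℓ)) (K : (Vec ℓ × ℝ) × ℝ → ℝ) : Prop where
  smooth : ∀ x ∈ W, ∀ θ ∈ Om, ContDiffAt ℝ n K ((x, θ), 0)
  pde : ∀ x ∈ W, ∀ θ ∈ Om, ∀ᶠ z in 𝓝 (((x, θ), 0) : (Vec ℓ × ℝ) × ℝ),
    fderiv ℝ K z (XF h ω g z) = 0
  per : ∀ x ∈ W, ∀ᶠ ε in 𝓝 (0:ℝ), K ((x, 0), ε) = K ((x, 2 * π), ε)

theorem aux_clm_var {E : Type} [NormedAddCommGroup E] [NormedSpace ℝ E] {Φ : E → (E →L[ℝ] ℝ)}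
    {Φ' : E →L[ℝ] (E →L[ℝ] ℝ)} {γ X : ℝ → E} {t : ℝ} {γ' X' : E} (hΦ : HasFDerivAt Φ Φ' (γ t))
    (hγ : HasDerivAt γ γ' t) (hX : HasDerivAt X X' t) :
    HasDerivAt (fun s => Φ (γ s) (X s)) (Φ' γ' (X t) + Φ (γ t) X') t :=
  (hΦ.comp_hasDerivAt t hγ).clm_apply hX

theorem aux_clm_const {E : Type} [NormedAddCommGroup E] [NormedSpace ℝ E] {Φ : E → (E →L[ℝ] ℝ)}
    {Φ' : E →L[ℝ] (E →L[ℝ] ℝ)} {γ : ℝ → E} {t : ℝ} {γ' : E} (hΦ : HasFDerivAt Φ Φ' (γ t))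
    (hγ : HasDerivAt γ γ' t) (v : E) :
    HasDerivAt (fun s => Φ (γ s) v) (Φ' γ' v) t := by
  have := aux_clm_var hΦ hγ (hasDerivAt_const t v)
  rwa [map_zero, add_zero] at this

theorem Om_icc {θ : ℝ} (hθ : θ ∈ Icc 0 (2 * π)) : θ ∈ Om :=
  ⟨by linarith [hθ.1], by linarith [hθ.2]⟩

theorem Om_zero : (0:ℝ) ∈ Om := Om_icc ⟨le_rfl, by positivity⟩
theorem Om_two_pi : 2 * π ∈ Om := Om_icc ⟨by positivity, le_rfl⟩

section
variable {ℓ : ℕ} {h : Vec ℓ → ℝ → ℝ → Vec ℓ} {ω : Vec ℓ → ℝ} {g : Vec ℓ → ℝ → ℝ → ℝ}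
  {n : ℕ} {W : Set (Vec ℓ)} {K : (Vec ℓ × ℝ) × ℝ → ℝ}

theorem Good.hasFDerivAt (hK : Good h ω g n W K) (hn : 1 ≤ n) {x : Vec ℓ} (hx : x ∈ W) {θ : ℝ}
    (hθ : θ ∈ Om) : HasFDerivAt K (fderiv ℝ K ((x, θ), 0)) ((x, θ), 0) :=
  ((hK.smooth x hx θ hθ).differentiableAt
    (by exact_mod_cast (by omega : n ≠ 0))).hasFDerivAt

theorem Good.dtheta (hK : Good h ω g n W K) {x : Vec ℓ} (hx : x ∈ W) {θ : ℝ} (hθ : θ ∈ Om)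
    (hω : ω x ≠ 0) : fderiv ℝ K ((x, θ), 0) ((0, 1), 0) = 0 := by
  have h1 := (hK.pde x hx θ hθ).self_of_nhds
  have h2 : XF h ω g (((x, θ), 0) : (Vec ℓ × ℝ) × ℝ) = ω x • (((0, 1), 0) : (Vec ℓ × ℝ) × ℝ) := by
    simp [XF]
  rw [h2, map_smul, smul_eq_mul] at h1
  exact (mul_eq_zero.1 h1).resolve_left hω

theorem hasDerivAt_theta (x : Vec ℓ) (θ e : ℝ) :
    HasDerivAt (fun θ : ℝ => (((x, θ), e) : (Vec ℓ × ℝ) × ℝ)) ((0, 1), 0) θ :=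
  ((hasDerivAt_const θ x).prodMk (hasDerivAt_id θ)).prodMk (hasDerivAt_const θ e)

theorem hasDerivAt_eps (p : Vec ℓ × ℝ) (e : ℝ) :
    HasDerivAt (fun e : ℝ => ((p, e) : (Vec ℓ × ℝ) × ℝ)) (0, 1) e :=
  (hasDerivAt_const e p).prodMk (hasDerivAt_id e)

theorem Good.const (hK : Good h ω g n W K) (hn : 1 ≤ n) {x : Vec ℓ} (hx : x ∈ W) {θ θ' : ℝ}
    (hθ : θ ∈ Om) (hθ' : θ' ∈ Om) (hω : ω x ≠ 0) : K ((x, θ), 0) = K ((x, θ'), 0) := by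
  have hd : ∀ θ ∈ Om, HasDerivAt (fun θ => K ((x, θ), 0)) 0 θ := by
    intro θ hθ
    have := (hK.hasFDerivAt hn hx hθ).comp_hasDerivAt θ (hasDerivAt_theta x θ 0)
    rwa [hK.dtheta hx hθ hω] at this
  exact isOpen_Ioo.is_const_of_deriv_eq_zero isPreconnected_Ioo
    (fun θ hθ => (hd θ hθ).differentiableAt.differentiableWithinAt)
    (fun θ hθ => (hd θ hθ).deriv) hθ hθ'

theorem Good.hasF (hK : Good h ω g n W K) (hn : 1 ≤ n) {x : Vec ℓ} (hx : x ∈ W) {θ : ℝ}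
    (hθ : θ ∈ Om) : HasFDerivAt (fun x => K ((x, θ), 0))
      ((fderiv ℝ K ((x, θ), 0)).comp ((ContinuousLinearMap.inl ℝ (Vec ℓ × ℝ) ℝ).comp
        (ContinuousLinearMap.inl ℝ (Vec ℓ) ℝ))) x := by
  have h1 : HasFDerivAt (fun x : Vec ℓ => (((x, θ), 0) : (Vec ℓ × ℝ) × ℝ))
      ((ContinuousLinearMap.inl ℝ (Vec ℓ × ℝ) ℝ).comp (ContinuousLinearMap.inl ℝ (Vec ℓ) ℝ)) x :=
    HasFDerivAt.comp (g := fun p : Vec ℓ × ℝ => (p, (0:ℝ))) (f := fun x : Vec ℓ => (x, θ)) x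
      (hasFDerivAt_prodMk_left (x, θ) (0:ℝ)) (hasFDerivAt_prodMk_left x θ)
  exact (hK.hasFDerivAt hn hx hθ).comp x h1

set_option maxHeartbeats 1000000 in
theorem Good.kill (hh : Differentiable ℝ (fun p : (Vec ℓ × ℝ) × ℝ => h p.1.1 p.1.2 p.2))
    (hg : Differentiable ℝ (fun p : (Vec ℓ × ℝ) × ℝ => g p.1.1 p.1.2 p.2))
    (hW : IsOpen W) (hωW : ∀ x ∈ W, ω x ≠ 0)
    (hK : Good h ω g n W K) (hn : 2 ≤ n) {x : Vec ℓ} (hx : x ∈ W) {θ' : ℝ}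
    (hθ' : θ' ∈ Om) :
    fderiv ℝ (fun x => K ((x, θ'), 0)) x (∫ θ in (0:ℝ)..(2 * π), h x θ 0) = 0 := by
  have hn1 : 1 ≤ n := by omega
  set L := fderiv ℝ (fun x => K ((x, θ'), 0)) x with hL
  set k1 : ℝ → ℝ := fun θ => fderiv ℝ K ((x, θ), 0) (0, 1) with hk1
  have hLθ : ∀ θ ∈ Om, ∀ v, fderiv ℝ K ((x, θ), 0) ((v, 0), 0) = L v := by
    intro θ hθ v
    have h1 := (hK.hasF hn1 hx hθ).fderiv
    have h2 : (fun x => K ((x, θ), 0)) =ᶠ[𝓝 x] (fun x => K ((x, θ'), 0)) := by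
      filter_upwards [hW.mem_nhds hx] with y hy
      exact hK.const hn1 hy hθ hθ' (hωW y hy)
    rw [h2.fderiv_eq] at h1
    rw [hL, h1]
    simp
  have hk1d : ∀ θ ∈ Om, HasDerivAt (fun θ => ω x * k1 θ) (-(L (h x θ 0))) θ := by
    intro θ hθ
    have hs : ContDiffAt ℝ 2 K ((x, θ), 0) :=
      (hK.smooth x hx θ hθ).of_le (by exact_mod_cast hn)
    have hsym : IsSymmSndFDerivAt ℝ K ((x, θ), 0) := hs.isSymmSndFDerivAt (by simp)
    have hd2 : HasFDerivAt (fderiv ℝ K) (fderiv ℝ (fderiv ℝ K) ((x, θ), 0)) ((x, θ), 0) :=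
      ((hs.fderiv_right (m := 1) (by norm_num)).differentiableAt (by simp)).hasFDerivAt
    -- derivative of k1
    have hk : HasDerivAt k1 (fderiv ℝ (fderiv ℝ K) ((x, θ), 0) ((0, 1), 0) (0, 1)) θ := by
      exact aux_clm_const (γ := fun θ : ℝ => (((x, θ), 0) : (Vec ℓ × ℝ) × ℝ)) hd2
        (hasDerivAt_theta x θ 0) (0, 1)
    -- differentiate the equation in the parameter
    have hX : HasDerivAt (fun e : ℝ => XF h ω g ((x, θ), e)) ((h x θ 0, g x θ 0), 0) 0 := by
      have e1 : HasDerivAt (fun e => h x θ e) (deriv (fun e => h x θ e) 0) 0 :=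
        (DifferentiableAt.comp (g := fun p : (Vec ℓ × ℝ) × ℝ => h p.1.1 p.1.2 p.2) (0:ℝ)
          (hh ((x, θ), 0)) (hasDerivAt_eps (x, θ) 0).differentiableAt).hasDerivAt
      have e2 : HasDerivAt (fun e => g x θ e) (deriv (fun e => g x θ e) 0) 0 :=
        (DifferentiableAt.comp (g := fun p : (Vec ℓ × ℝ) × ℝ => g p.1.1 p.1.2 p.2) (0:ℝ)
          (hg ((x, θ), 0)) (hasDerivAt_eps (x, θ) 0).differentiableAt).hasDerivAt
      have e3 := (((hasDerivAt_id (0:ℝ)).smul e1).prodMk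
        (((hasDerivAt_id (0:ℝ)).mul e2).const_add (ω x))).prodMk (hasDerivAt_const (0:ℝ) (0:ℝ))
      simp only [id, zero_smul, one_smul, zero_add, one_mul, zero_mul, add_zero] at e3
      exact e3
    have hE := aux_clm_var (γ := fun e : ℝ => (((x, θ), e) : (Vec ℓ × ℝ) × ℝ))
      (X := fun e : ℝ => XF h ω g ((x, θ), e)) hd2 (hasDerivAt_eps (x, θ) 0) hX
    have hE0 : HasDerivAt (fun e : ℝ => fderiv ℝ K ((x, θ), e) (XF h ω g ((x, θ), e))) 0 0 := by
      refine (hasDerivAt_const (0:ℝ) (0:ℝ)).congr_of_eventuallyEq ?_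
      exact (hasDerivAt_eps (x, θ) 0).continuousAt.eventually (hK.pde x hx θ hθ)
    have hEq := hE.unique hE0
    have hX0 : XF h ω g (((x, θ), 0) : (Vec ℓ × ℝ) × ℝ)
        = ω x • (((0, 1), 0) : (Vec ℓ × ℝ) × ℝ) := by simp [XF]
    have hsplit : (((h x θ 0, g x θ 0), 0) : (Vec ℓ × ℝ) × ℝ) = ((h x θ 0, 0), 0) +
        g x θ 0 • (((0, 1), 0) : (Vec ℓ × ℝ) × ℝ) := by simp
    rw [hX0, hsplit, map_smul, map_add, map_smul, hLθ θ hθ, hK.dtheta hx hθ (hωW x hx),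
      hsym.eq] at hEq
    have := hk.const_mul (ω x)
    simp only [smul_eq_mul, mul_zero, add_zero] at hEq
    rw [eq_neg_of_add_eq_zero_left hEq] at this
    exact this
  have hcont : Continuous fun θ => h x θ 0 :=
    hh.continuous.comp (f := fun θ : ℝ => (((x, θ), 0) : (Vec ℓ × ℝ) × ℝ)) (by fun_prop)
  have hint := intervalIntegral.integral_eq_sub_of_hasDerivAt (a := 0) (b := 2 * π)
    (f := fun θ => ω x * k1 θ) (f' := fun θ => -(L (h x θ 0)))
    (fun θ hθ => hk1d θ (Om_icc (by rwa [uIcc_of_le (by positivity)] at hθ)))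
    ((L.continuous.comp hcont).neg.intervalIntegrable _ _)
  have hper : k1 0 = k1 (2 * π) := by
    have h0 := (hK.hasFDerivAt hn1 hx Om_zero).comp_hasDerivAt (0:ℝ) (hasDerivAt_eps (x, 0) 0)
    have h1 := (hK.hasFDerivAt hn1 hx Om_two_pi).comp_hasDerivAt (0:ℝ)
      (hasDerivAt_eps (x, 2 * π) 0)
    exact h0.unique (h1.congr_of_eventuallyEq (hK.per x hx))
  rw [intervalIntegral.integral_neg, L.intervalIntegral_comp_comm (hcont.intervalIntegrable _ _),
    hper, sub_self, neg_eq_zero] at hint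
  exact hint
end


/-- The Jacobian determinant in the action variables. -/
def DG {ℓ : ℕ} (G : Fin ℓ → (Vec ℓ × ℝ) × ℝ → ℝ) (θ : ℝ) (x : Vec ℓ) (ε : ℝ) : ℝ :=
  Matrix.det (Matrix.of fun j i : Fin ℓ =>
    fderiv ℝ (G j) ((x, θ), ε) ((Pi.single i 1, 0), 0))

theorem det_step {ℓ : ℕ} (M M' : Matrix (Fin ℓ) (Fin ℓ) ℝ) (j : Fin ℓ)
    (hrow : ∀ i, i ≠ j → M i = M' i) (c : Fin ℓ → ℝ) (hc : M j = ∑ k, c k • M' k) :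
    M.det = c j * M'.det := by
  have : M = M'.updateRow j (∑ k, c k • M' k) := by
    ext i k
    by_cases hi : i = j
    · subst hi
      rw [Matrix.updateRow_self, hc]
    · rw [Matrix.updateRow_ne hi, hrow i hi]
  rw [this, Matrix.det_updateRow_sum, smul_eq_mul]

section
variable {ℓ : ℕ} {h : Vec ℓ → ℝ → ℝ → Vec ℓ} {ω : Vec ℓ → ℝ} {g : Vec ℓ → ℝ → ℝ → ℝ}
  {n : ℕ} {W : Set (Vec ℓ)} {K : (Vec ℓ × ℝ) × ℝ → ℝ}

theorem Good.mono {m : ℕ} {W' : Set (Vec ℓ)} (hK : Good h ω g n W K) (hm : m ≤ n) (hW : W' ⊆ W) :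
    Good h ω g m W' K :=
  ⟨fun x hx θ hθ => (hK.smooth x (hW hx) θ hθ).of_le (by exact_mod_cast hm),
    fun x hx => hK.pde x (hW hx), fun x hx => hK.per x (hW hx)⟩

theorem hq_mul {Z : Type} [NormedAddCommGroup Z] [NormedSpace ℝ Z] {K : Z × ℝ → ℝ} {z : Z × ℝ}
    (h0 : K (z.1, 0) = 0) : K z = z.2 * hq K z := by
  obtain ⟨p, e⟩ := z
  by_cases he : e = 0
  · subst he
    simpa [hq] using h0
  · simp only [hq, he, if_false]
    field_simp

/-- Dividing a good function vanishing at ε = 0. -/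
theorem Good.quot (hX : Continuous (XF h ω g)) (hW : IsOpen W) (hK : Good h ω g (n + 1) W K)
    (hn : 1 ≤ n) (h0 : ∀ x ∈ W, ∀ θ ∈ Om, K ((x, θ), 0) = 0) :
    Good h ω g n W (hq K) ∧ ∀ x ∈ W, ∀ θ ∈ Om, ∀ᶠ z in 𝓝 (((x, θ), 0) : (Vec ℓ × ℝ) × ℝ),
      ∀ v, v.2 = 0 → fderiv ℝ K z v = z.2 * fderiv ℝ (hq K) z v := by
  have hev0 : ∀ x ∈ W, ∀ θ ∈ Om, ∀ᶠ p in 𝓝 (x, θ), K (p, 0) = 0 := by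
    intro x hx θ hθ
    filter_upwards [(hW.prod isOpen_Ioo).mem_nhds (⟨hx, hθ⟩ : (x, θ) ∈ W ×ˢ Om)] with p hp
    exact h0 p.1 hp.1 p.2 hp.2
  have hsm : ∀ x ∈ W, ∀ θ ∈ Om, ContDiffAt ℝ n (hq K) ((x, θ), 0) := by
    intro x hx θ hθ
    refine hq_contDiffAt ?_ (hev0 x hx θ hθ)
    exact_mod_cast hK.smooth x hx θ hθ
  have hsm1 : ∀ x ∈ W, ∀ θ ∈ Om, ∀ᶠ z in 𝓝 (((x, θ), 0) : (Vec ℓ × ℝ) × ℝ),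
      ContDiffAt ℝ 1 (hq K) z := fun x hx θ hθ =>
    ((hsm x hx θ hθ).of_le (by exact_mod_cast hn)).eventually (by simp)
  have hmul : ∀ x ∈ W, ∀ θ ∈ Om, ∀ᶠ z in 𝓝 (((x, θ), 0) : (Vec ℓ × ℝ) × ℝ),
      ∀ v, v.2 = 0 → fderiv ℝ K z v = z.2 * fderiv ℝ (hq K) z v := by
    intro x hx θ hθ
    have e1 : ∀ᶠ z in 𝓝 (((x, θ), 0) : (Vec ℓ × ℝ) × ℝ), K (z.1, 0) = 0 :=
      (continuous_fst.tendsto (((x, θ), 0) : (Vec ℓ × ℝ) × ℝ)).eventually (hev0 x hx θ hθ)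
    have e2 : ∀ᶠ z in 𝓝 (((x, θ), 0) : (Vec ℓ × ℝ) × ℝ), K z = z.2 * hq K z :=
      e1.mono fun z hz => hq_mul hz
    filter_upwards [e2.eventually_nhds, hsm1 x hx θ hθ] with z hz hs v hv
    have hd : HasFDerivAt (fun z : (Vec ℓ × ℝ) × ℝ => z.2 * hq K z) _ z :=
      (hasFDerivAt_snd (𝕜 := ℝ) (p := z)).mul (hs.differentiableAt (by simp)).hasFDerivAt
    rw [(hd.congr_of_eventuallyEq hz).fderiv]
    simp [hv]
  refine ⟨⟨hsm, ?_, ?_⟩, hmul⟩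
  · intro x hx θ hθ
    have e1 : ∀ᶠ z in 𝓝 (((x, θ), 0) : (Vec ℓ × ℝ) × ℝ), z.2 ≠ 0 →
        fderiv ℝ (hq K) z (XF h ω g z) = 0 := by
      filter_upwards [hmul x hx θ hθ, hK.pde x hx θ hθ] with z h1 h2 hz
      rw [h1 _ rfl] at h2
      exact (mul_eq_zero.1 h2).resolve_left hz
    filter_upwards [e1.eventually_nhds, hsm1 x hx θ hθ] with z hz hs
    by_cases hz2 : z.2 = 0
    · have hc : ContinuousAt (fun z => fderiv ℝ (hq K) z (XF h ω g z)) z :=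
        (hs.fderiv_right (m := 0) (by simp)).continuousAt.clm_apply hX.continuousAt
      have hpath : Tendsto (fun e : ℝ => (z.1, e)) (𝓝[≠] 0) (𝓝 z) := by
        have : Tendsto (fun e : ℝ => (z.1, e)) (𝓝 0) (𝓝 (z.1, 0)) :=
          (Continuous.prodMk_right z.1).continuousAt
        rw [← hz2] at this
        rw [← hz2]
        exact this.mono_left nhdsWithin_le_nhds
      have t1 := hc.tendsto.comp hpath
      have t2 : Tendsto ((fun z => fderiv ℝ (hq K) z (XF h ω g z)) ∘
          fun e : ℝ => (z.1, e)) (𝓝[≠] 0) (𝓝 0) := by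
        refine tendsto_const_nhds.congr' ?_
        filter_upwards [hpath.eventually hz, self_mem_nhdsWithin] with e he he0
        exact (he he0).symm
      exact tendsto_nhds_unique t1 t2
    · exact hz.self_of_nhds hz2
  · intro x hx
    filter_upwards [hK.per x hx] with e he
    by_cases h : e = 0
    · subst h
      have a0 := (hK.hasFDerivAt (by omega) hx Om_zero).comp_hasDerivAt (0:ℝ)
        (hasDerivAt_eps (x, 0) 0)
      have a1 := (hK.hasFDerivAt (by omega) hx Om_two_pi).comp_hasDerivAt (0:ℝ)
        (hasDerivAt_eps (x, 2 * π) 0)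
      simpa [hq] using a0.unique (a1.congr_of_eventuallyEq (hK.per x hx))
    · simp [hq, h, he]

theorem not_indep {L : Fin ℓ → (Vec ℓ →L[ℝ] ℝ)} {v : Vec ℓ} (hv : v ≠ 0) (hL : ∀ j, L j v = 0) :
    ¬ LinearIndependent ℝ L := by
  intro hli
  have h1 := aux_surj hli
  have h2 : Function.Injective (ContinuousLinearMap.pi L : Vec ℓ →L[ℝ] (Fin ℓ → ℝ)).toLinearMap :=
    LinearMap.injective_iff_surjective.2 (LinearMap.range_eq_top.1 h1)
  apply hv
  apply h2
  ext j
  simp [hL]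

theorem DG_zero (hh : Differentiable ℝ (fun p : (Vec ℓ × ℝ) × ℝ => h p.1.1 p.1.2 p.2))
    (hg : Differentiable ℝ (fun p : (Vec ℓ × ℝ) × ℝ => g p.1.1 p.1.2 p.2))
    (hW : IsOpen W) (hωW : ∀ x ∈ W, ω x ≠ 0)
    (hHW : ∀ x ∈ W, (∫ θ in (0:ℝ)..(2 * π), h x θ 0) ≠ 0)
    {G : Fin ℓ → (Vec ℓ × ℝ) × ℝ → ℝ} (hG : ∀ j, Good h ω g n W (G j)) (hn : 2 ≤ n)
    {x : Vec ℓ} (hx : x ∈ W) {θ' : ℝ} (hθ' : θ' ∈ Om) : DG G θ' x 0 = 0 := by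
  unfold DG
  rw [← Matrix.exists_mulVec_eq_zero_iff]
  refine ⟨_, hHW x hx, ?_⟩
  ext j
  have h1 := (hG j).kill hh hg hW hωW hn hx hθ'
  rw [((hG j).hasF (by omega) hx hθ').fderiv] at h1
  set v := ∫ θ in (0:ℝ)..(2 * π), h x θ 0
  rw [ContinuousLinearMap.comp_apply] at h1
  have h2 := LinearMap.pi_apply_eq_sum_univ (((fderiv ℝ (G j) ((x, θ'), 0)).comp
    ((ContinuousLinearMap.inl ℝ (Vec ℓ × ℝ) ℝ).comp
        (ContinuousLinearMap.inl ℝ (Vec ℓ) ℝ))).toLinearMap) v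
  simp only [ContinuousLinearMap.coe_coe, ContinuousLinearMap.comp_apply] at h2 h1
  rw [h1] at h2
  rw [Matrix.mulVec, dotProduct, Pi.zero_apply]
  refine Eq.trans ?_ h2.symm
  refine Finset.sum_congr rfl fun i _ => ?_
  rw [smul_eq_mul, mul_comm]
  have : (Pi.single i 1 : Vec ℓ) = fun k => if i = k then 1 else 0 := by
    ext k
    simp [Pi.single_apply, eq_comm]
  simp [this]

theorem DG_cont {G : Fin ℓ → (Vec ℓ × ℝ) × ℝ → ℝ} (hG : ∀ j, Good h ω g n W (G j)) (hn : 1 ≤ n)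
    {x : Vec ℓ} (hx : x ∈ W) {θ' : ℝ} (hθ' : θ' ∈ Om) :
    ContinuousAt (fun ε => DG G θ' x ε) 0 := by
  unfold DG
  refine ContinuousAt.comp (g := Matrix.det) (Continuous.matrix_det continuous_id).continuousAt ?_
  refine continuousAt_pi.2 fun j => continuousAt_pi.2 fun i => ?_
  have h1 : ContinuousAt (fderiv ℝ (G j)) ((x, θ'), 0) :=
    (((hG j).smooth x hx θ' hθ').fderiv_right (m := 0) (by exact_mod_cast hn)).continuousAt
  have h2 : ContinuousAt (fun ε : ℝ => fderiv ℝ (G j) ((x, θ'), ε)) 0 :=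
    ContinuousAt.comp (f := fun ε : ℝ => (((x, θ'), ε) : (Vec ℓ × ℝ) × ℝ)) h1 (by fun_prop)
  exact h2.clm_apply continuousAt_const

theorem Good.step (hh : Differentiable ℝ (fun p : (Vec ℓ × ℝ) × ℝ => h p.1.1 p.1.2 p.2))
    (hg : Differentiable ℝ (fun p : (Vec ℓ × ℝ) × ℝ => g p.1.1 p.1.2 p.2))
    (hX : Continuous (XF h ω g))
    (hW : IsOpen W) (hne : W.Nonempty) (hωW : ∀ x ∈ W, ω x ≠ 0)
    (hHW : ∀ x ∈ W, (∫ θ in (0:ℝ)..(2 * π), h x θ 0) ≠ 0)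
    {G : Fin ℓ → (Vec ℓ × ℝ) × ℝ → ℝ} (hG : ∀ j, Good h ω g (n + 1) W (G j)) (hn : 1 ≤ n)
    {θ' : ℝ} (hθ' : θ' ∈ Om) :
    ∃ W' ⊆ W, IsOpen W' ∧ W'.Nonempty ∧ ∃ G' : Fin ℓ → (Vec ℓ × ℝ) × ℝ → ℝ,
      (∀ j, Good h ω g n W' (G' j)) ∧
      ∀ x ∈ W', ∀ᶠ ε in 𝓝 (0:ℝ), DG G θ' x ε = ε * DG G' θ' x ε := by
  classical
  have hn1 : (1:WithTop ℕ∞) ≤ ((n + 1 : ℕ) : WithTop ℕ∞) := by exact_mod_cast (by omega : 1 ≤ n + 1)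
  have hn0 : ((n + 1 : ℕ) : WithTop ℕ∞) ≠ 0 := by exact_mod_cast (by omega : n + 1 ≠ 0)
  have hin : ∀ x : Vec ℓ, ContDiffAt ℝ ((n + 1 : ℕ) : WithTop ℕ∞)
      (fun x : Vec ℓ => (((x, θ'), 0) : (Vec ℓ × ℝ) × ℝ)) x := fun x => by fun_prop
  obtain ⟨x₁, hx₁, S, j, hjS, φ, hφ, hFφ⟩ := func_dep (n := n + 1) (by omega) hW hne
    (F := fun j x => G j ((x, θ'), 0))
    (fun j x hx => ContDiffAt.comp (f := fun x : Vec ℓ => (((x, θ'), 0) : (Vec ℓ × ℝ) × ℝ)) x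
      ((hG j).smooth x hx θ' hθ') (hin x))
    (fun x hx => not_indep (hHW x hx) fun j =>
      (hG j).kill hh hg hW hωW (by omega) hx hθ')
  -- eventual smoothness of φ along the base
  have hφev : ∀ᶠ x in 𝓝 x₁, ContDiffAt ℝ ((n + 1 : ℕ) : WithTop ℕ∞) φ
      (fun i : S => G i ((x, θ'), 0)) := by
    have hc : ContinuousAt (fun x => fun i : S => G i ((x, θ'), 0)) x₁ :=
      continuousAt_pi.2 fun i => ((hG i).hasF (by omega) hx₁ hθ').continuousAt
    exact hc.eventually (hφ.eventually (by simp))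
  obtain ⟨W', hW's, hW'o, hx₁W'⟩ := mem_nhds_iff.1
    (Filter.inter_mem (Filter.inter_mem hFφ hφev) (hW.mem_nhds hx₁))
  have hW'W : W' ⊆ W := fun x hx => (hW's hx).2
  set K : (Vec ℓ × ℝ) × ℝ → ℝ := fun z => G j z - φ (fun i : S => G i z) with hKdef
  have hval : ∀ x ∈ W', ∀ θ ∈ Om, ∀ i, G i ((x, θ), 0) = G i ((x, θ'), 0) := fun x hx θ hθ i =>
    (hG i).const (by omega) (hW'W hx) hθ hθ' (hωW x (hW'W hx))
  have hK0 : ∀ x ∈ W', ∀ θ ∈ Om, K ((x, θ), 0) = 0 := by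
    intro x hx θ hθ
    have h1 : G j ((x, θ'), 0) = φ (fun i : S => G i ((x, θ'), 0)) := (hW's hx).1.1
    simp only [hKdef, hval x hx θ hθ]
    rw [h1, sub_self]
  have hφs : ∀ x ∈ W', ∀ θ ∈ Om, ContDiffAt ℝ ((n + 1 : ℕ) : WithTop ℕ∞) φ
      (fun i : S => G i ((x, θ), 0)) := by
    intro x hx θ hθ
    simp only [hval x hx θ hθ]
    exact (hW's hx).1.2
  have hKd : ∀ x ∈ W', ∀ θ ∈ Om, ∀ᶠ z in 𝓝 (((x, θ), 0) : (Vec ℓ × ℝ) × ℝ),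
      HasFDerivAt K (fderiv ℝ (G j) z - (fderiv ℝ φ (fun i : S => G i z)).comp
        (ContinuousLinearMap.pi fun i : S => fderiv ℝ (G i) z)) z := by
    intro x hx θ hθ
    have e1 : ∀ᶠ z in 𝓝 (((x, θ), 0) : (Vec ℓ × ℝ) × ℝ), ∀ i, DifferentiableAt ℝ (G i) z := by
      rw [eventually_all]
      intro i
      exact ((((hG i).smooth x (hW'W hx) θ hθ).of_le hn1).eventually (by simp)).mono
        fun z hz => hz.differentiableAt (by simp)
    have e2 : ∀ᶠ z in 𝓝 (((x, θ), 0) : (Vec ℓ × ℝ) × ℝ),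
        DifferentiableAt ℝ φ (fun i : S => G i z) := by
      have hc : ContinuousAt (fun z => fun i : S => G i z) (((x, θ), 0) : (Vec ℓ × ℝ) × ℝ) :=
        continuousAt_pi.2 fun i => ((hG i).hasFDerivAt (by omega) (hW'W hx) hθ).continuousAt
      exact hc.eventually (((((hφs x hx θ hθ)).of_le hn1).eventually (by simp)).mono
        fun z hz => hz.differentiableAt (by simp))
    filter_upwards [e1, e2] with z h1 h2
    exact (h1 j).hasFDerivAt.sub (HasFDerivAt.comp (f := fun z => fun i : S => G i z) z
      h2.hasFDerivAt (hasFDerivAt_pi.2 fun i => (h1 i).hasFDerivAt))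
  have hKgood : Good h ω g (n + 1) W' K := by
    refine ⟨?_, ?_, ?_⟩
    · intro x hx θ hθ
      exact ((hG j).smooth x (hW'W hx) θ hθ).sub (ContDiffAt.comp (f := fun z => fun i : S => G i z)
        _ (hφs x hx θ hθ) (contDiffAt_pi.2 fun i => (hG i).smooth x (hW'W hx) θ hθ))
    · intro x hx θ hθ
      have e1 : ∀ᶠ z in 𝓝 (((x, θ), 0) : (Vec ℓ × ℝ) × ℝ), ∀ i,
          fderiv ℝ (G i) z (XF h ω g z) = 0 := by
        rw [eventually_all]
        exact fun i => (hG i).pde x (hW'W hx) θ hθ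
      filter_upwards [hKd x hx θ hθ, e1] with z hz h1
      rw [hz.fderiv]
      have : (ContinuousLinearMap.pi fun i : S => fderiv ℝ (G i) z) (XF h ω g z) = 0 := by
        ext i
        simp [h1]
      simp [h1, this]
    · intro x hx
      have e1 : ∀ᶠ e in 𝓝 (0:ℝ), ∀ i, G i ((x, 0), e) = G i ((x, 2 * π), e) := by
        rw [eventually_all]
        exact fun i => (hG i).per x (hW'W hx)
      filter_upwards [e1] with e he
      simp only [hKdef, he]
  obtain ⟨hqG, hqm⟩ := hKgood.quot hX hW'o hn hK0
  refine ⟨W', hW'W, hW'o, ⟨x₁, hx₁W'⟩, Function.update G j (hq K), ?_, ?_⟩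
  · intro i
    by_cases hi : i = j
    · subst hi
      rw [Function.update_self]
      exact hqG
    · rw [Function.update_of_ne hi]
      exact (hG i).mono (by omega) hW'W
  · intro x hx
    have hpath : Tendsto (fun e : ℝ => (((x, θ'), e) : (Vec ℓ × ℝ) × ℝ)) (𝓝 0) (𝓝 ((x, θ'), 0)) :=
      (Continuous.prodMk_right (x, θ')).continuousAt
    filter_upwards [hpath.eventually (hKd x hx θ' hθ'), hpath.eventually (hqm x hx θ' hθ')]
      with e h1 h2
    set z : (Vec ℓ × ℝ) × ℝ := ((x, θ'), e) with hz
    set c : Fin ℓ → ℝ := fun k => if k = j then e else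
      if hk : k ∈ S then fderiv ℝ φ (fun i : S => G i z) (Pi.single ⟨k, hk⟩ 1) else 0 with hc
    have hcj : c j = e := by simp [hc]
    rw [← hcj]
    refine det_step _ _ j ?_ c ?_
    · intro i hi
      ext k
      simp [Function.update_of_ne hi]
    · ext k
      have h3 := h2 ((Pi.single k 1, 0), 0) rfl
      rw [h1.fderiv, _root_.sub_apply, ContinuousLinearMap.comp_apply,
        ← ContinuousLinearMap.coe_coe (fderiv ℝ φ _), LinearMap.pi_apply_eq_sum_univ] at h3
      rw [Finset.sum_apply, ← Finset.add_sum_erase _ _ (Finset.mem_univ j)]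
      simp only [Matrix.of_apply, Pi.smul_apply, smul_eq_mul, Function.update_self, hcj]
      rw [sub_eq_iff_eq_add] at h3
      rw [h3]
      congr 1
      have h4 : ∀ i ∈ Finset.univ.erase j, c i * fderiv ℝ (Function.update G j (hq K) i) z
          ((Pi.single k 1, 0), 0) = if hi : i ∈ S then
            fderiv ℝ φ (fun i : S => G i z) (Pi.single ⟨i, hi⟩ 1) *
              fderiv ℝ (G i) z ((Pi.single k 1, 0), 0) else 0 := by
        intro i hi
        have hij : i ≠ j := Finset.ne_of_mem_erase hi
        rw [Function.update_of_ne hij]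
        simp only [hc, hij, if_false]
        split_ifs <;> simp
      rw [Finset.sum_congr rfl h4, Finset.sum_erase _ (by simp [hjS])]
      rw [← Finset.sum_subset (Finset.subset_univ S) (by intro i _ hi; simp [hi]),
        ← Finset.sum_coe_sort S]
      refine Finset.sum_congr rfl fun i _ => ?_
      have : (Pi.single i 1 : S → ℝ) = fun k => if i = k then 1 else 0 := by
        ext k
        simp [Pi.single_apply, eq_comm]
      simp [this, mul_comm]
end


section
variable {ℓ : ℕ} {h : Vec ℓ → ℝ → ℝ → Vec ℓ} {ω : Vec ℓ → ℝ} {g : Vec ℓ → ℝ → ℝ → ℝ}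

theorem DG_littleO (hh : Differentiable ℝ (fun p : (Vec ℓ × ℝ) × ℝ => h p.1.1 p.1.2 p.2))
    (hg : Differentiable ℝ (fun p : (Vec ℓ × ℝ) × ℝ => g p.1.1 p.1.2 p.2))
    (hX : Continuous (XF h ω g)) {θ' : ℝ} (hθ' : θ' ∈ Om) (k : ℕ) :
    ∀ (W : Set (Vec ℓ)), IsOpen W → W.Nonempty → (∀ x ∈ W, ω x ≠ 0) →
    (∀ x ∈ W, (∫ θ in (0:ℝ)..(2 * π), h x θ 0) ≠ 0) →
    ∀ G : Fin ℓ → (Vec ℓ × ℝ) × ℝ → ℝ, (∀ j, Good h ω g (k + 2) W (G j)) →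
    ∃ x ∈ W, (fun ε => DG G θ' x ε) =o[𝓝[≠] 0] (fun ε : ℝ => ε ^ k) := by
  induction k with
  | zero =>
    intro W hW hne hωW hHW G hG
    obtain ⟨x, hx⟩ := hne
    refine ⟨x, hx, ?_⟩
    simp only [pow_zero]
    rw [Asymptotics.isLittleO_one_iff]
    have h1 := (DG_cont hG (by omega) hx hθ').tendsto
    rw [DG_zero hh hg hW hωW hHW hG (by omega) hx hθ'] at h1
    exact h1.mono_left nhdsWithin_le_nhds
  | succ k ih =>
    intro W hW hne hωW hHW G hG
    obtain ⟨W', hsub, hW', hne', G', hG', hdet⟩ := Good.step (n := k + 2) hh hg hX hW hne hωW hHW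
      (fun j => (hG j).mono (by omega) subset_rfl) (by omega) hθ'
    obtain ⟨x, hx, hxo⟩ := ih W' hW' hne' (fun x hx => hωW x (hsub hx))
      (fun x hx => hHW x (hsub hx)) G' hG'
    refine ⟨x, hsub hx, ?_⟩
    have h1 : (fun ε : ℝ => ε * DG G' θ' x ε) =o[𝓝[≠] 0] (fun ε : ℝ => ε * ε ^ k) :=
      (Asymptotics.isBigO_refl (fun ε : ℝ => ε) _).mul_isLittleO hxo
    refine (h1.congr' ?_ ?_)
    · exact ((hdet x hx).filter_mono nhdsWithin_le_nhds).mono fun e he => he.symm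
    · exact Eventually.of_forall fun e => (pow_succ' e k).symm
end

theorem iteratedDeriv_of_littleO {f : ℝ → ℝ} (hf : AnalyticAt ℝ f 0) {n : ℕ}
    (ho : f =o[𝓝[≠] 0] (fun ε : ℝ => ε ^ n)) : iteratedDeriv n f 0 = 0 := by
  have key : ((n + 1 : ℕ) : ℕ∞) ≤ analyticOrderAt f 0 := by
    by_contra hlt
    rw [not_le] at hlt
    obtain ⟨m, hm⟩ := ENat.ne_top_iff_exists.1 (ne_top_of_lt hlt)
    rw [← hm] at hlt
    have hmn : m ≤ n := by
      have : m < n + 1 := by exact_mod_cast hlt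
      omega
    obtain ⟨u, hu, hu0, hev⟩ := hf.analyticOrderAt_eq_natCast.1 hm.symm
    simp only [sub_zero, smul_eq_mul] at hev
    apply hu0
    have h1 := ho.tendsto_div_nhds_zero
    have h2 : Tendsto (fun ε : ℝ => f ε / ε ^ n * ε ^ (n - m)) (𝓝[≠] 0) (𝓝 0) := by
      have h3 : Tendsto (fun ε : ℝ => ε ^ (n - m)) (𝓝[≠] 0) (𝓝 (0 ^ (n - m))) :=
        ((continuous_pow (n - m)).tendsto 0).mono_left nhdsWithin_le_nhds
      simpa using h1.mul h3
    have h4 : Tendsto u (𝓝[≠] 0) (𝓝 0) := by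
      refine h2.congr' ?_
      filter_upwards [hev.filter_mono nhdsWithin_le_nhds, self_mem_nhdsWithin] with e he he0
      have he0' : e ≠ 0 := he0
      rw [he]
      have : e ^ n = e ^ m * e ^ (n - m) := by rw [← pow_add]; congr 1; omega
      rw [this]
      field_simp
    exact tendsto_nhds_unique (hu.continuousAt.tendsto.mono_left nhdsWithin_le_nhds) h4
  exact (natCast_le_analyticOrderAt_iff_iteratedDeriv_eq_zero hf).1 key n (by omega)

/-- Iterated derivatives in the last variable. -/
def Dk {E : Type} [NormedAddCommGroup E] [NormedSpace ℝ E] (Δ : E × ℝ → ℝ) : ℕ → E × ℝ → ℝ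
  | 0 => Δ
  | k + 1 => fun z => fderiv ℝ (Dk Δ k) z (0, 1)

theorem analyticAt_clm {E : Type} [NormedAddCommGroup E] [NormedSpace ℝ E]
    {f : E → ℝ} {z : E} (hf : AnalyticAt ℝ f z) (v : E) :
    AnalyticAt ℝ (fun z => fderiv ℝ f z v) z :=
  ((ContinuousLinearMap.apply ℝ ℝ v).analyticAt _).comp hf.fderiv

theorem Dk_analytic {E : Type} [NormedAddCommGroup E] [NormedSpace ℝ E] {Δ : E × ℝ → ℝ}
    {s : Set (E × ℝ)} (hΔ : AnalyticOnNhd ℝ Δ s) (k : ℕ) : AnalyticOnNhd ℝ (Dk Δ k) s := by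
  induction k with
  | zero => exact hΔ
  | succ k ih => exact fun z hz => analyticAt_clm (ih z hz) _

theorem Dk_iteratedDeriv {E : Type} [NormedAddCommGroup E] [NormedSpace ℝ E] {Δ : E × ℝ → ℝ}
    {s : Set (E × ℝ)} (hs : IsOpen s) (hΔ : AnalyticOnNhd ℝ Δ s) (k : ℕ) :
    ∀ p e, (p, e) ∈ s → iteratedDeriv k (fun e => Δ (p, e)) e = Dk Δ k (p, e) := by
  induction k with
  | zero => intro p e _; simp [Dk]
  | succ k ih =>
    intro p e he
    rw [iteratedDeriv_succ]
    have h1 : iteratedDeriv k (fun e => Δ (p, e)) =ᶠ[𝓝 e] fun e => Dk Δ k (p, e) := by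
      have : ∀ᶠ e' in 𝓝 e, (p, e') ∈ s :=
        (Continuous.prodMk_right p).continuousAt.eventually (hs.mem_nhds he)
      exact this.mono fun e' he' => ih p e' he'
    rw [h1.deriv_eq]
    have h2 := ((Dk_analytic hΔ k) (p, e) he).differentiableAt.hasFDerivAt
    have h3 : HasDerivAt (fun e : ℝ => (p, e)) ((0:E), (1:ℝ)) e :=
      (hasDerivAt_const e p).prodMk (hasDerivAt_id e)
    exact (h2.comp_hasDerivAt e h3).deriv

theorem analytic_det {E : Type} [NormedAddCommGroup E] [NormedSpace ℝ E] {ℓ : ℕ}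
    {A : Fin ℓ → Fin ℓ → E → ℝ} {z : E} (hA : ∀ j i, AnalyticAt ℝ (A j i) z) :
    AnalyticAt ℝ (fun z => Matrix.det (Matrix.of fun j i => A j i z)) z := by
  simp only [Matrix.det_apply', Matrix.of_apply]
  refine Finset.analyticAt_fun_sum _ fun σ _ => ?_
  exact analyticAt_const.mul (Finset.analyticAt_fun_prod _ fun i _ => hA _ _)

theorem det_ne_zero_of_indep {ℓ : ℕ} {L : Fin ℓ → (Vec ℓ × ℝ →L[ℝ] ℝ)} (hL : LinearIndependent ℝ L)
    {v : Vec ℓ} {s : ℝ} (hs : s ≠ 0) (hk : ∀ j, L j (v, s) = 0) :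
    Matrix.det (Matrix.of fun j i : Fin ℓ => L j (Pi.single i 1, 0)) ≠ 0 := by
  classical
  intro h0
  obtain ⟨a, ha, hav⟩ := Matrix.exists_vecMul_eq_zero_iff.2 h0
  apply ha
  have hsum : ∑ j, a j • L j = 0 := by
    set T := ∑ j, a j • L j with hT
    have e1 : ∀ i, T (Pi.single i 1, 0) = 0 := by
      intro i
      have := congr_fun hav i
      simpa [Matrix.vecMul, dotProduct, hT] using this
    have e2 : ∀ w : Vec ℓ, T (w, 0) = 0 := by
      intro w
      have h2 := LinearMap.pi_apply_eq_sum_univ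
        ((T.comp (ContinuousLinearMap.inl ℝ (Vec ℓ) ℝ)).toLinearMap) w
      have h3 : ∀ i : Fin ℓ, (fun k => if i = k then (1:ℝ) else 0) = Pi.single i 1 := by
        intro i
        ext k
        simp [Pi.single_apply, eq_comm]
      simpa [h3, e1] using h2
    have e3 : T (v, s) = 0 := by simp [hT, hk]
    have e4 : T (0, 1) = 0 := by
      have : ((v, s) : Vec ℓ × ℝ) = (v, 0) + s • ((0, 1) : Vec ℓ × ℝ) := by simp
      rw [this, map_add, e2, map_smul, zero_add, smul_eq_mul] at e3
      exact (mul_eq_zero.1 e3).resolve_left hs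
    ext1
    · ext1 w
      simpa using e2 w
    · ext1
      simpa using e4
  ext j
  exact Fintype.linearIndependent_iff.1 hL a hsum j


theorem ev_ne_zero {F : Type} [NormedAddCommGroup F] [NormedSpace ℝ F] {f : ℝ → F}
    {s : Set ℝ} (hs : IsPreconnected s)
    (hf : AnalyticOnNhd ℝ f s) (h0 : (0:ℝ) ∈ s) {t : ℝ} (hts : t ∈ s) (ht : f t ≠ 0) :
    ∀ᶠ t in 𝓝[≠] 0, f t ≠ 0 := by
  rcases (hf 0 h0).eventually_eq_zero_or_eventually_ne_zero with h | h
  · exact absurd (hf.eqOn_zero_of_preconnected_of_eventuallyEq_zero hs h0 h hts) ht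
  · exact h

theorem exists_good_open {ℓ : ℕ} {c : Vec ℓ} {h : Vec ℓ → ℝ → ℝ → Vec ℓ} {ω : Vec ℓ → ℝ}
    (hhan : AnalyticOnNhd ℝ (fun p : (Vec ℓ × ℝ) × ℝ => h p.1.1 p.1.2 p.2) univ)
    (hωan : AnalyticOnNhd ℝ ω univ) {b : Vec ℓ} (hb : ω b ≠ 0)
    (hb' : (∫ θ in (0:ℝ)..(2 * π), h b θ 0) ≠ 0) {W₀ : Set (Vec ℓ)} (hW₀ : IsOpen W₀)
    (hc : c ∈ W₀) :
    ∃ W ⊆ W₀, IsOpen W ∧ W.Nonempty ∧ (∀ x ∈ W, ω x ≠ 0) ∧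
      ∀ x ∈ W, (∫ θ in (0:ℝ)..(2 * π), h x θ 0) ≠ 0 := by
  have hcont : Continuous (fun x : Vec ℓ => ∫ θ in (0:ℝ)..(2 * π), h x θ 0) := by
    apply intervalIntegral.continuous_parametric_intervalIntegral_of_continuous'
    exact (continuousOn_univ.1 hhan.continuousOn).comp
      (f := fun q : Vec ℓ × ℝ => (((q.1, q.2), 0) : (Vec ℓ × ℝ) × ℝ)) (by fun_prop)
  have hωc : Continuous ω := continuousOn_univ.1 hωan.continuousOn
  have hline : AnalyticOnNhd ℝ (fun t : ℝ => c + t • (b - c)) univ := fun t _ => by fun_prop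
  have h1 : ∀ᶠ t in 𝓝[≠] (0:ℝ), ω (c + t • (b - c)) ≠ 0 := by
    refine ev_ne_zero (f := fun t : ℝ => ω (c + t • (b - c))) (t := 1) isPreconnected_univ ?_
      (mem_univ _) (mem_univ _) (by simpa using hb)
    exact fun t _ => AnalyticAt.comp (f := fun t : ℝ => c + t • (b - c)) (hωan _ (mem_univ _))
      (hline t (mem_univ _))
  have h2 : ∀ᶠ t in 𝓝[≠] (0:ℝ), (∫ θ in (0:ℝ)..(2 * π), h (c + t • (b - c)) θ 0) ≠ 0 := by
    refine ev_ne_zero (f := fun t : ℝ => ∫ θ in (0:ℝ)..(2 * π), h (c + t • (b - c)) θ 0) (t := 1)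
      isPreconnected_univ ?_ (mem_univ _) (mem_univ _) (by simpa using hb')
    refine aux_integral_analytic (H := fun q : ℝ × ℝ => h (c + q.1 • (b - c)) q.2 0) ?_ _
    exact fun q _ => AnalyticAt.comp
      (g := fun p : (Vec ℓ × ℝ) × ℝ => h p.1.1 p.1.2 p.2)
      (f := fun q : ℝ × ℝ => (((c + q.1 • (b - c), q.2), 0) : (Vec ℓ × ℝ) × ℝ))
      (hhan _ (mem_univ _))
      (((analyticAt_const.add (analyticAt_fst.smul analyticAt_const)).prod analyticAt_snd).prod
        analyticAt_const)
  have h3 : ∀ᶠ t in 𝓝[≠] (0:ℝ), c + t • (b - c) ∈ W₀ := by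
    have : Tendsto (fun t : ℝ => c + t • (b - c)) (𝓝 0) (𝓝 c) := by
      have : Continuous (fun t : ℝ => c + t • (b - c)) := by fun_prop
      simpa using this.tendsto 0
    exact (this.mono_left nhdsWithin_le_nhds).eventually (hW₀.mem_nhds hc)
  obtain ⟨t, ⟨ht1, ht2⟩, ht3⟩ := ((h1.and h2).and h3).exists
  refine ⟨W₀ ∩ ({x | ω x ≠ 0} ∩ {x | (∫ θ in (0:ℝ)..(2 * π), h x θ 0) ≠ 0}), inter_subset_left,
    hW₀.inter ((isOpen_ne_fun hωc continuous_const).inter (isOpen_ne_fun hcont continuous_const)),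
    ⟨_, ht3, ht1, ht2⟩, fun x hx => hx.2.1, fun x hx => hx.2.2⟩

theorem main_contra {ℓ : ℕ} (c : Vec ℓ)
    (h : Vec ℓ → ℝ → ℝ → Vec ℓ) (ω : Vec ℓ → ℝ) (g : Vec ℓ → ℝ → ℝ → ℝ)
    (hhan : AnalyticOnNhd ℝ (fun p : (Vec ℓ × ℝ) × ℝ => h p.1.1 p.1.2 p.2) univ)
    (hωan : AnalyticOnNhd ℝ ω univ)
    (hgan : AnalyticOnNhd ℝ (fun p : (Vec ℓ × ℝ) × ℝ => g p.1.1 p.1.2 p.2) univ)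
    (b : Vec ℓ) (hb : ω b ≠ 0) (hb' : (∫ θ in (0:ℝ)..(2 * π), h b θ 0) ≠ 0)
    (ε₀ : ℝ) (hε₀ : 0 < ε₀) (V : Set (Vec ℓ × ℝ)) (G : Fin ℓ → (Vec ℓ × ℝ) → ℝ → ℝ)
    (hV : IsOpen V) (hcV : ∀ θ : ℝ, (c, θ) ∈ V)
    (hGan : ∀ j, AnalyticOnNhd ℝ (fun z : (Vec ℓ × ℝ) × ℝ => G j z.1 z.2) (V ×ˢ Ioo (-ε₀) ε₀))
    (hper : ∀ j ε (p : Vec ℓ × ℝ), G j (p.1, p.2 + 2 * π) ε = G j p ε)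
    (hpde : ∀ j, ∀ ε ∈ Ioo (-ε₀) ε₀, ∀ p ∈ V,
        fderiv ℝ (fun z => G j z ε) p
          ((ε • h p.1 p.2 ε, ω p.1 + ε * g p.1 p.2 ε) : Vec ℓ × ℝ) = 0)
    (hind : ∀ ε ∈ Ioo (-ε₀) ε₀, ε ≠ 0 →
        ∀ᵐ p ∂(volume : Measure (Vec ℓ × ℝ)), p ∈ V →
          LinearIndependent ℝ fun j => fderiv ℝ (fun z => G j z ε) p) : False := by
  have hhc : Continuous (fun p : (Vec ℓ × ℝ) × ℝ => h p.1.1 p.1.2 p.2) :=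
    continuousOn_univ.1 hhan.continuousOn
  have hgc : Continuous (fun p : (Vec ℓ × ℝ) × ℝ => g p.1.1 p.1.2 p.2) :=
    continuousOn_univ.1 hgan.continuousOn
  have hωc : Continuous ω := continuousOn_univ.1 hωan.continuousOn
  have hhd : Differentiable ℝ (fun p : (Vec ℓ × ℝ) × ℝ => h p.1.1 p.1.2 p.2) :=
    fun z => (hhan z (mem_univ _)).differentiableAt
  have hgd : Differentiable ℝ (fun p : (Vec ℓ × ℝ) × ℝ => g p.1.1 p.1.2 p.2) :=
    fun z => (hgan z (mem_univ _)).differentiableAt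
  have hX : Continuous (XF h ω g) := by
    exact ((continuous_snd.smul hhc).prodMk ((hωc.comp (continuous_fst.comp continuous_fst)).add
      (continuous_snd.mul hgc))).prodMk continuous_const
  have h0I : (0:ℝ) ∈ Ioo (-ε₀) ε₀ := ⟨by linarith, hε₀⟩
  have hVo : IsOpen (V ×ˢ Ioo (-ε₀) ε₀) := hV.prod isOpen_Ioo
  set Γ : Fin ℓ → (Vec ℓ × ℝ) × ℝ → ℝ := fun j z => G j z.1 z.2 with hΓ
  have hslice : ∀ j, ∀ z ∈ V ×ˢ Ioo (-ε₀) ε₀, ∀ v : Vec ℓ × ℝ,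
      fderiv ℝ (fun p => G j p z.2) z.1 v = fderiv ℝ (Γ j) z (v, 0) := by
    rintro j ⟨p, e⟩ hz v
    have h1 : HasFDerivAt (fun p => G j p e) ((fderiv ℝ (Γ j) (p, e)).comp
        (ContinuousLinearMap.inl ℝ (Vec ℓ × ℝ) ℝ)) p :=
      HasFDerivAt.comp (g := Γ j) (f := fun p => (p, e)) p
        (hGan j (p, e) hz).differentiableAt.hasFDerivAt (hasFDerivAt_prodMk_left p e)
    rw [h1.fderiv]
    simp
  -- tube
  obtain ⟨W₀, T, hW₀, -, hcW, hIT, hWT⟩ := generalized_tube_lemma (isCompact_singleton (x := c))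
    (isCompact_Icc (a := (-1:ℝ)) (b := 2 * π + 1)) hV
    (by rintro ⟨x, θ⟩ ⟨rfl, -⟩; exact hcV θ)
  have hW₀V : ∀ x ∈ W₀, ∀ θ ∈ Om, (x, θ) ∈ V := fun x hx θ hθ =>
    hWT ⟨hx, hIT ⟨hθ.1.le, hθ.2.le⟩⟩
  obtain ⟨W, hWW₀, hW, hWne, hωW, hHW⟩ := exists_good_open hhan hωan hb hb' hW₀
    (hcW (mem_singleton c))
  have hgood : ∀ n j, Good h ω g n W (Γ j) := by
    intro n j
    refine ⟨?_, ?_, ?_⟩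
    · intro x hx θ hθ
      exact (hGan j _ ⟨hW₀V x (hWW₀ hx) θ hθ, h0I⟩).contDiffAt
    · intro x hx θ hθ
      filter_upwards [hVo.mem_nhds (⟨hW₀V x (hWW₀ hx) θ hθ, h0I⟩ :
        (((x, θ), 0) : (Vec ℓ × ℝ) × ℝ) ∈ V ×ˢ Ioo (-ε₀) ε₀)] with z hz
      have := hpde j z.2 hz.2 z.1 hz.1
      rw [hslice j z hz] at this
      exact this
    · intro x hx
      refine Eventually.of_forall fun e => ?_
      have := hper j e (x, 0)
      simp only [zero_add] at this
      exact this.symm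
  -- a point with nonzero determinant
  obtain ⟨xa, hxa⟩ := hWne
  obtain ⟨ε₁, hε₁I, hε₁0, hε₁⟩ : ∃ ε₁ ∈ Ioo (-ε₀) ε₀, ε₁ ≠ 0 ∧ ω xa + ε₁ * g xa 0 ε₁ ≠ 0 := by
    have hc1 : Continuous (fun e : ℝ => ω xa + e * g xa 0 e) := by
      have : Continuous (fun e : ℝ => g xa 0 e) :=
        hgc.comp (f := fun e : ℝ => (((xa, 0), e) : (Vec ℓ × ℝ) × ℝ)) (by fun_prop)
      fun_prop
    have e1 : ∀ᶠ e in 𝓝[≠] (0:ℝ), ω xa + e * g xa 0 e ≠ 0 := by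
      refine Filter.Eventually.filter_mono nhdsWithin_le_nhds ?_
      exact hc1.continuousAt.eventually_ne (by simpa using hωW xa hxa)
    have e2 : ∀ᶠ e in 𝓝[≠] (0:ℝ), e ∈ Ioo (-ε₀) ε₀ :=
      Filter.Eventually.filter_mono nhdsWithin_le_nhds (isOpen_Ioo.mem_nhds h0I)
    have e3 : ∀ᶠ e in 𝓝[≠] (0:ℝ), e ≠ 0 := self_mem_nhdsWithin
    obtain ⟨e, ⟨h1, h2⟩, h3⟩ := ((e1.and e2).and e3).exists
    exact ⟨e, h2, h3, h1⟩
  obtain ⟨⟨xs, θs⟩, ⟨⟨hxs, hθs⟩, hps⟩, hli⟩ : ∃ p : Vec ℓ × ℝ, (p ∈ W ×ˢ Om ∧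
      ω p.1 + ε₁ * g p.1 p.2 ε₁ ≠ 0) ∧ LinearIndependent ℝ fun j => fderiv ℝ (fun z => G j z ε₁) p := by
    have hd := Measure.dense_of_ae (hind ε₁ hε₁I hε₁0)
    have hc1 : Continuous (fun p : Vec ℓ × ℝ => ω p.1 + ε₁ * g p.1 p.2 ε₁) := by
      have : Continuous (fun p : Vec ℓ × ℝ => g p.1 p.2 ε₁) :=
        hgc.comp (f := fun p : Vec ℓ × ℝ => (((p.1, p.2), ε₁) : (Vec ℓ × ℝ) × ℝ)) (by fun_prop)
      fun_prop
    have ho : IsOpen (W ×ˢ Om ∩ {p : Vec ℓ × ℝ | ω p.1 + ε₁ * g p.1 p.2 ε₁ ≠ 0}) :=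
      (hW.prod isOpen_Ioo).inter (isOpen_ne_fun hc1 continuous_const)
    obtain ⟨p, hp, hp2⟩ := hd.inter_open_nonempty _ ho ⟨(xa, 0), ⟨hxa, Om_zero⟩, hε₁⟩
    exact ⟨p, hp, hp2 (hW₀V p.1 (hWW₀ hp.1.1) p.2 hp.1.2)⟩
  have hpV : (xs, θs) ∈ V := hW₀V xs (hWW₀ hxs) θs hθs
  set Δ : (Vec ℓ × ℝ) × ℝ → ℝ := fun z => Matrix.det (Matrix.of fun j i : Fin ℓ =>
    fderiv ℝ (Γ j) z ((Pi.single i 1, 0), 0)) with hΔ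
  have hΔan : AnalyticOnNhd ℝ Δ (V ×ˢ Ioo (-ε₀) ε₀) := fun z hz =>
    analytic_det fun j i => analyticAt_clm (hGan j z hz) _
  have hΔ1 : Δ ((xs, θs), ε₁) ≠ 0 := by
    have := det_ne_zero_of_indep hli hps (fun j => hpde j ε₁ hε₁I (xs, θs) hpV)
    simpa only [hslice _ ((xs, θs), ε₁) ⟨hpV, hε₁I⟩] using this
  -- slices are analytic
  have hsl : ∀ p ∈ V, AnalyticOnNhd ℝ (fun e => Δ (p, e)) (Ioo (-ε₀) ε₀) := fun p hp e he =>
    AnalyticAt.comp (g := Δ) (f := fun e : ℝ => (p, e)) (hΔan (p, e) ⟨hp, he⟩) (by fun_prop)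
  obtain ⟨n, hn⟩ : ∃ n : ℕ, iteratedDeriv n (fun e => Δ ((xs, θs), e)) 0 ≠ 0 := by
    have hne : analyticOrderAt (fun e => Δ ((xs, θs), e)) 0 ≠ ⊤ := by
      intro htop
      rw [analyticOrderAt_eq_top] at htop
      exact hΔ1 ((hsl _ hpV).eqOn_zero_of_preconnected_of_eventuallyEq_zero isPreconnected_Ioo
        h0I htop hε₁I)
    obtain ⟨n, hn⟩ := ENat.ne_top_iff_exists.1 hne
    exact ⟨n, ((analyticOrderAt_eq_nat_iff_iteratedDeriv_eq_zero (hsl _ hpV 0 h0I)).1 hn.symm).2⟩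
  rw [Dk_iteratedDeriv hVo hΔan n _ _ ⟨hpV, h0I⟩] at hn
  have hcn : ContinuousAt (fun x : Vec ℓ => Dk Δ n ((x, θs), 0)) xs :=
    ContinuousAt.comp (g := Dk Δ n) (f := fun x : Vec ℓ => (((x, θs), 0) : (Vec ℓ × ℝ) × ℝ))
      (Dk_analytic hΔan n _ ⟨hpV, h0I⟩).continuousAt (by fun_prop)
  obtain ⟨W₂, hW₂s, hW₂o, hxs₂⟩ := mem_nhds_iff.1
    (Filter.inter_mem (hcn.eventually_ne hn) (hW.mem_nhds hxs))
  have hW₂W : W₂ ⊆ W := fun x hx => (hW₂s hx).2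
  obtain ⟨x, hx, hxo⟩ := DG_littleO hhd hgd hX hθs n W₂ hW₂o ⟨xs, hxs₂⟩
    (fun x hx => hωW x (hW₂W hx)) (fun x hx => hHW x (hW₂W hx)) Γ
    (fun j => (hgood (n + 2) j).mono le_rfl hW₂W)
  have hxV : (x, θs) ∈ V := hW₀V x (hWW₀ (hW₂W hx)) θs hθs
  have hz := iteratedDeriv_of_littleO (f := fun e => Δ ((x, θs), e)) (hsl _ hxV 0 h0I) hxo
  rw [Dk_iteratedDeriv hVo hΔan n _ _ ⟨hxV, h0I⟩] at hz
  exact (hW₂s hx).1 hz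


end

/-- Theorem 4.3: for m = 1, if ω(I) ≠ 0 and ĥ₀(I) ≠ 0 for some I ∈ U, the perturbed
system has no ℓ first integrals near {c} × S¹ as in the statement. -/
theorem aa_no_first_integrals_m_one
    (ℓ : ℕ)
    (c : Vec ℓ) (U : Set (Vec ℓ)) (hUopen : IsOpen U) (hcU : c ∈ U)
    -- the system İ = ε h(I,θ;ε), θ̇ = ω(I) + ε g(I,θ;ε) on ℝ^ℓ × S¹,
    -- real-analytic and 2π-periodic in θ
    (h : Vec ℓ → ℝ → ℝ → Vec ℓ) (ω : Vec ℓ → ℝ) (g : Vec ℓ → ℝ → ℝ → ℝ)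
    (hhan : AnalyticOnNhd ℝ (fun p : (Vec ℓ × ℝ) × ℝ => h p.1.1 p.1.2 p.2) univ)
    (hωan : AnalyticOnNhd ℝ ω univ)
    (hgan : AnalyticOnNhd ℝ (fun p : (Vec ℓ × ℝ) × ℝ => g p.1.1 p.1.2 p.2) univ)
    (hhper : ∀ I θ ε, h I (θ + 2 * π) ε = h I θ ε)
    (hgper : ∀ I θ ε, g I (θ + 2 * π) ε = g I θ ε)
    -- hypothesis: ω(I) ≠ 0 and ĥ₀(I) ≠ 0 for some I ∈ U
    (hres : ∃ I ∈ U, ω I ≠ 0 ∧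
      ((2 * π)⁻¹ • ∫ θ in (0:ℝ)..(2 * π), h I θ 0) ≠ 0) :
    -- conclusion: no ε₀, neighborhood V of {c} × S¹ and analytic G : V × (−ε₀,ε₀) → ℝ^ℓ
    -- whose components are first integrals for every ε and whose differentials are
    -- linearly independent a.e. on V for every ε ≠ 0
    ¬ ∃ (ε₀ : ℝ) (_ : 0 < ε₀) (V : Set (Vec ℓ × ℝ)) (G : Fin ℓ → (Vec ℓ × ℝ) → ℝ → ℝ),
      IsOpen V ∧ V ⊆ U ×ˢ univ ∧ (∀ θ : ℝ, (c, θ) ∈ V) ∧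
      (∀ p ∈ V, (p.1, p.2 + 2 * π) ∈ V) ∧
      (∀ j, AnalyticOnNhd ℝ (fun z : (Vec ℓ × ℝ) × ℝ => G j z.1 z.2) (V ×ˢ Ioo (-ε₀) ε₀)) ∧
      (∀ j ε (p : Vec ℓ × ℝ), G j (p.1, p.2 + 2 * π) ε = G j p ε) ∧
      (∀ j, ∀ ε ∈ Ioo (-ε₀) ε₀, ∀ p ∈ V,
        fderiv ℝ (fun z => G j z ε) p
          ((ε • h p.1 p.2 ε, ω p.1 + ε * g p.1 p.2 ε) : Vec ℓ × ℝ) = 0) ∧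
      (∀ ε ∈ Ioo (-ε₀) ε₀, ε ≠ 0 →
        ∀ᵐ p ∂(volume : Measure (Vec ℓ × ℝ)), p ∈ V →
          LinearIndependent ℝ fun j => fderiv ℝ (fun z => G j z ε) p) := by
  rintro ⟨ε₀, hε₀, V, G, hV, -, hcV, -, hGan, hper, hpde, hind⟩
  obtain ⟨b, -, hb, hb'⟩ := hres
  exact main_contra c h ω g hhan hωan hgan b hb (fun h0 => hb' (by rw [h0, smul_zero]))
    ε₀ hε₀ V G hV hcV hGan hper hpde hind
end
end

section
/- Let U ⊆ ℝ^p be open and connected and let ω : U → ℝ^q be real-analytic with p ≤ q, satisfying (K2): if r ∈ ℤ^q and r·ω(I) = 0 for all I ∈ U, then r = 0; and (A4): rank Dω(I*) = p for some I* ∈ U. Consider the vector field X⁰(I,θ) = (0, ω(I)) on U × T^q. Then a real-analytic vector field Z(I,θ) = (Z^I(I,θ), Z^θ(I,θ)) on U × T^q commutes with X⁰ (i.e. [Z,X⁰] ≡ 0) if and only if Z^I ≡ 0 and Z^θ(I,θ) = ρ(I) for some real-analytic map ρ : U → ℝ^q, i.e. Z = Σ_{l=1}^q ρ_l(I) ∂/∂θ_l.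 In particular, X⁰ admits at most q commuting real-analytic vector fields that are linearly independent almost everywhere. -/
open MeasureTheory Set Real

noncomputable section

/-- Lie bracket of two vector fields on a real normed space:
[Y,Z](x) = DZ(x)Y(x) − DY(x)Z(x). -/
def lieBracket {E : Type*} [NormedAddCommGroup E] [NormedSpace ℝ E]
    (Y Z : E → E) (x : E) : E :=
  fderiv ℝ Z x (Y x) - fderiv ℝ Y x (Z x)

/-- A continuous `2πℤ^q`-periodic function is bounded. -/
theorem aux_bounded {q : ℕ} (f : Vec q → ℝ) (hf : Continuous f)
    (hper : ∀ (θ : Vec q) (r : Fin q → ℤ), f (fun i => θ i + 2 * π * (r i : ℝ)) = f θ) :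
    ∃ C, ∀ θ, |f θ| ≤ C := by
  have hc : IsCompact (Set.Icc (0 : Vec q) (fun _ => 2 * π)) := isCompact_Icc
  obtain ⟨C, hC⟩ := hc.exists_bound_of_continuousOn hf.continuousOn
  refine ⟨C, fun θ => ?_⟩
  have h2 : 0 < 2 * π := by positivity
  rw [← hper θ (fun i => -⌊θ i / (2 * π)⌋)]
  refine hC _ ⟨fun i => ?_, fun i => ?_⟩
  · have h1 := Int.floor_le (θ i / (2 * π))
    rw [le_div_iff₀ h2] at h1
    simp only [Pi.zero_apply]
    push_cast
    linarith
  · have h1 := (Int.lt_floor_add_one (θ i / (2 * π))).le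
    rw [div_le_iff₀ h2] at h1
    push_cast
    linarith

/-- A continuous function on the torus invariant under a nonresonant flow is constant. -/
theorem aux_const {q : ℕ} (f : Vec q → ℝ) (hf : Continuous f)
    (hper : ∀ (θ : Vec q) (r : Fin q → ℤ), f (fun i => θ i + 2 * π * (r i : ℝ)) = f θ)
    (w : Vec q) (hw : ∀ r : Fin q → ℤ, r ≠ 0 → (∑ i, (r i : ℝ) * w i) ≠ 0)
    (hinv : ∀ (θ : Vec q) (t : ℝ), f (θ + t • w) = f θ) :
    ∀ θ, f θ = f 0 := by
  have h2 : 0 < 2 * π := by positivity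
  let mk : Vec q → UnitAddTorus (Fin q) := Pi.map (fun _ => ((↑) : ℝ → AddCircle (1 : ℝ)))
  have hmk : IsOpenQuotientMap mk :=
    IsOpenQuotientMap.piMap (fun _ => QuotientAddGroup.isOpenQuotientMap_mk)
  have hfib : ∀ x y : Vec q, mk x = mk y →
      f (fun i => 2 * π * x i) = f (fun i => 2 * π * y i) := by
    intro x y hxy
    have h : ∀ i, ∃ n : ℤ, y i + n = x i := by
      intro i
      have h1 : ((x i : ℝ) : AddCircle (1 : ℝ)) = (y i : ℝ) := congrFun hxy i
      rw [eq_comm, QuotientAddGroup.eq, AddSubgroup.mem_zmultiples_iff] at h1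
      obtain ⟨n, hn⟩ := h1
      refine ⟨n, ?_⟩
      simp at hn
      linarith
    choose n hn using h
    rw [← hper (fun i => 2 * π * y i) n]
    congr 1
    funext i
    rw [← hn i]; ring
  let F : UnitAddTorus (Fin q) → ℂ := fun x =>
    ((f (fun i => 2 * π * (Function.surjInv hmk.surjective x) i) : ℝ) : ℂ)
  have hFmk : ∀ x, F (mk x) = ((f (fun i => 2 * π * x i) : ℝ) : ℂ) := by
    intro x
    simp only [F]
    rw [hfib _ x (Function.surjInv_eq hmk.surjective (mk x))]
  have hFc : Continuous F := by
    rw [← hmk.continuous_comp_iff]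
    have : F ∘ mk = fun x => ((f (fun i => 2 * π * x i) : ℝ) : ℂ) := funext hFmk
    rw [this]
    fun_prop
  have hmkadd : ∀ x y, mk (x + y) = mk x + mk y := by
    intro x y; rfl
  have hFinv : ∀ (x : UnitAddTorus (Fin q)) (t : ℝ), F (x + mk (t • w)) = F x := by
    intro x t
    obtain ⟨y, rfl⟩ := hmk.surjective x
    rw [← hmkadd, hFmk, hFmk, ← hinv (fun i => 2 * π * y i) (2 * π * t)]
    congr 2
    funext i
    simp
    ring
  have hcoef : ∀ n : Fin q → ℤ, n ≠ 0 → UnitAddTorus.mFourierCoeff F n = 0 := by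
    intro n hn
    have hs := hw n hn
    set S := ∑ i, (n i : ℝ) * w i with hS
    let s : UnitAddTorus (Fin q) := mk ((1 / (2 * S)) • w)
    have hchar : UnitAddTorus.mFourier (-n) s = -1 := by
      have : UnitAddTorus.mFourier (-n) s
          = ∏ i, Complex.exp (2 * π * Complex.I * ((-n i : ℤ) : ℂ) * (((1 / (2 * S)) * w i : ℝ) : ℂ) / ((1 : ℝ) : ℂ)) := by
        simp only [UnitAddTorus.mFourier, ContinuousMap.coe_mk]
        refine Finset.prod_congr rfl fun i _ => ?_
        exact fourier_coe_apply
      rw [this, ← Complex.exp_sum]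
      have h3 : (∑ i, (2 * π * Complex.I * ((-n i : ℤ) : ℂ) * (((1 / (2 * S)) * w i : ℝ) : ℂ) / ((1 : ℝ) : ℂ)))
          = -(π * Complex.I) := by
        have : ∀ i, (2 * π * Complex.I * ((-n i : ℤ) : ℂ) * (((1 / (2 * S)) * w i : ℝ) : ℂ) / ((1 : ℝ) : ℂ))
          = (-(π * Complex.I) / (S : ℂ)) * (((n i : ℝ) * w i : ℝ) : ℂ) := by
          intro i
          have : (S : ℂ) ≠ 0 := by exact_mod_cast hs
          push_cast
          field_simp
        simp_rw [this]
        rw [← Finset.mul_sum, ← Complex.ofReal_sum, ← hS]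
        have : (S : ℂ) ≠ 0 := by exact_mod_cast hs
        field_simp
      rw [h3, Complex.exp_neg, Complex.exp_pi_mul_I]
      norm_num
    have hmul : ∀ x, UnitAddTorus.mFourier (-n) (x + s)
        = UnitAddTorus.mFourier (-n) x * UnitAddTorus.mFourier (-n) s := by
      intro x
      simp only [UnitAddTorus.mFourier, ContinuousMap.coe_mk, ← Finset.prod_mul_distrib]
      refine Finset.prod_congr rfl fun i _ => ?_
      simp [fourier_apply, AddCircle.toCircle_add, smul_add]
    have hI := MeasureTheory.integral_add_right_eq_self
      (μ := (Measure.pi fun _ => AddCircle.haarAddCircle : Measure (Fin q → AddCircle (1 : ℝ))))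
      (fun x => UnitAddTorus.mFourier (-n) x • F x) s
    have hneg : ∀ x, UnitAddTorus.mFourier (-n) (x + s) • F (x + s)
        = - (UnitAddTorus.mFourier (-n) x • F x) := by
      intro x
      rw [hmul, hchar, hFinv]
      simp
    simp_rw [hneg] at hI
    rw [MeasureTheory.integral_neg] at hI
    unfold UnitAddTorus.mFourierCoeff
    exact self_eq_neg.mp hI.symm
  have hsum : Summable (UnitAddTorus.mFourierCoeff F) :=
    summable_of_ne_finset_zero (s := {0}) (fun n hn => hcoef n (by simpa using hn))
  have hH := UnitAddTorus.hasSum_mFourier_series_of_summable (f := ⟨F, hFc⟩) hsum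
  have hH2 := hasSum_single (f := fun i => UnitAddTorus.mFourierCoeff F i • UnitAddTorus.mFourier i)
    (0 : Fin q → ℤ) (fun n hn => by
      simp only [hcoef n hn]
      exact zero_smul ℂ (UnitAddTorus.mFourier n))
  have hEq := hH.unique hH2
  have hval : ∀ x, F x = UnitAddTorus.mFourierCoeff F 0 := by
    intro x
    have := congrArg (fun g : C(UnitAddTorus (Fin q), ℂ) => g x) hEq
    simpa [UnitAddTorus.mFourier_zero] using this
  intro θ
  have e1 := hFmk (fun i => θ i / (2 * π))
  have e2 := hFmk 0
  rw [hval] at e1 e2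
  have e3 : f (fun i => 2 * π * (θ i / (2 * π))) = f (fun i => 2 * π * (0 : Vec q) i) := by
    exact_mod_cast e1.symm.trans e2
  convert e3 using 2
  · funext i; field_simp
  · funext i; simp

/-- Nonresonant points are dense in `U`. -/
theorem aux_dense {p q : ℕ} (U : Set (Vec p)) (hUopen : IsOpen U) (hUconn : IsConnected U)
    (ω : Vec p → Vec q) (hωan : AnalyticOnNhd ℝ ω U)
    (hK2 : ∀ r : Fin q → ℤ, (∀ I ∈ U, (∑ i, (r i : ℝ) * ω I i) = 0) → r = 0) :
    ∃ D : Set (Vec p), Dense D ∧ ∀ I ∈ D, I ∈ U →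
      ∀ r : Fin q → ℤ, r ≠ 0 → (∑ i, (r i : ℝ) * ω I i) ≠ 0 := by
  have han : ∀ r : Fin q → ℤ, AnalyticOnNhd ℝ (fun I => ∑ i, (r i : ℝ) * ω I i) U := by
    intro r I hI
    have h1 := hωan I hI
    have h2 : ∀ i, AnalyticAt ℝ (fun I => ω I i) I := by
      intro i
      exact ((ContinuousLinearMap.proj (R := ℝ) (φ := fun _ : Fin q => ℝ) i).analyticAt _).comp h1
    exact Finset.analyticAt_fun_sum _ (fun i _ => analyticAt_const.mul (h2 i))
  let G : {r : Fin q → ℤ // r ≠ 0} → Set (Vec p) := fun r =>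
    (U ∩ (fun I => ∑ i, (r.1 i : ℝ) * ω I i) ⁻¹' {0}ᶜ) ∪ (closure U)ᶜ
  have hGo : ∀ r, IsOpen (G r) := by
    intro r
    exact ((han r.1).continuousOn.isOpen_inter_preimage hUopen isOpen_compl_singleton).union
      isClosed_closure.isOpen_compl
  have hGd : ∀ r, Dense (G r) := by
    intro r
    rw [dense_iff_inter_open]
    intro V hV ⟨x, hx⟩
    by_contra hne
    rw [Set.not_nonempty_iff_eq_empty] at hne
    have hxU : x ∈ closure U := by
      by_contra h
      have : x ∈ V ∩ G r := ⟨hx, Or.inr h⟩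
      rw [hne] at this; exact this
    obtain ⟨y, hyV, hyU⟩ := mem_closure_iff.mp hxU V hV hx
    have hev : (fun I => ∑ i, (r.1 i : ℝ) * ω I i) =ᶠ[nhds y] 0 := by
      filter_upwards [(hV.inter hUopen).mem_nhds ⟨hyV, hyU⟩] with z hz
      by_contra h
      have : z ∈ V ∩ G r := ⟨hz.1, Or.inl ⟨hz.2, h⟩⟩
      rw [hne] at this; exact this
    have := (han r.1).eqOn_zero_of_preconnected_of_eventuallyEq_zero hUconn.isPreconnected hyU hev
    exact r.2 (hK2 r.1 (fun I hI => this hI))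
  refine ⟨⋂ r, G r, dense_iInter_of_isOpen hGo hGd, ?_⟩
  intro I hI hIU r hr
  rcases Set.mem_iInter.mp hI ⟨r, hr⟩ with h | h
  · exact h.2
  · exact absurd (subset_closure hIU) h

theorem aux_line {f : ℝ → ℝ} {v : ℝ} (h : ∀ t, HasDerivAt f v t) (t : ℝ) : f t = f 0 + t * v := by
  have h1 : ∀ s, HasDerivAt (fun s => f s - s * v) 0 s := by
    intro s
    have h2 := (h s).sub ((hasDerivAt_id s).mul_const v)
    rw [one_mul, sub_self] at h2
    exact h2
  have := is_const_of_deriv_eq_zero (fun s => (h1 s).differentiableAt) (fun s => (h1 s).deriv) t 0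
  simp at this
  linarith

theorem aux_fwd
    (p q : ℕ) 
    (U : Set (Vec p)) (hUopen : IsOpen U) (hUconn : IsConnected U)
    (ω : Vec p → Vec q) (hωan : AnalyticOnNhd ℝ ω U)
    (hK2 : ∀ r : Fin q → ℤ, (∀ I ∈ U, (∑ i, (r i : ℝ) * ω I i) = 0) → r = 0)
    (Istar : Vec p) (hIstar : Istar ∈ U)
    (hA4 : Module.finrank ℝ
      (LinearMap.range ((fderiv ℝ ω Istar) : Vec p →ₗ[ℝ] Vec q)) = p)
    (Z : Vec p × Vec q → Vec p × Vec q)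
    (hZ : AnalyticOnNhd ℝ Z (U ×ˢ (univ : Set (Vec q))))
    (hper : ∀ (z : Vec p × Vec q) (r : Fin q → ℤ),
        Z (z.1, fun i => z.2 i + 2 * π * (r i : ℝ)) = Z z)
    (hbr : ∀ z ∈ U ×ˢ (univ : Set (Vec q)),
          lieBracket Z (fun w : Vec p × Vec q => ((0, ω w.1) : Vec p × Vec q)) z = 0) :
    ∃ ρ : Vec p → Vec q, AnalyticOnNhd ℝ ρ U ∧
          ∀ I ∈ U, ∀ θ : Vec q, Z (I, θ) = ((0, ρ I) : Vec p × Vec q) := by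
  have hbr' : ∀ I ∈ U, ∀ θ : Vec q, fderiv ℝ Z (I, θ) (0, ω I)
      = (0, fderiv ℝ ω I (Z (I, θ)).1) := by
    intro I hI θ
    have h := hbr (I, θ) ⟨hI, mem_univ _⟩
    unfold lieBracket at h
    have hd : HasFDerivAt (fun w : Vec p × Vec q => ((0, ω w.1) : Vec p × Vec q))
        ((0 : Vec p × Vec q →L[ℝ] Vec p).prod
          ((fderiv ℝ ω I).comp (ContinuousLinearMap.fst ℝ (Vec p) (Vec q)))) (I, θ) := by
      refine (hasFDerivAt_const _ _).prodMk ?_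
      exact HasFDerivAt.comp (I, θ) (hωan I hI).differentiableAt.hasFDerivAt hasFDerivAt_fst
    rw [hd.fderiv, sub_eq_zero] at h
    rw [← h]
    rfl
  have hcont : ∀ I ∈ U, Continuous fun θ : Vec q => Z (I, θ) := by
    intro I hI
    rw [continuous_iff_continuousAt]
    intro θ
    exact ContinuousAt.comp (f := fun θ : Vec q => (I, θ)) (hZ (I, θ) ⟨hI, mem_univ _⟩).continuousAt
      (by fun_prop)
  have hderiv : ∀ I ∈ U, ∀ θ : Vec q, ∀ t : ℝ,
      HasDerivAt (fun t : ℝ => Z (I, θ + t • ω I))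
        (0, fderiv ℝ ω I (Z (I, θ + t • ω I)).1) t := by
    intro I hI θ t
    rw [← hbr' I hI]
    have h1 : HasDerivAt (fun t : ℝ => ((I, θ + t • ω I) : Vec p × Vec q)) (0, ω I) t := by
      refine (hasDerivAt_const _ _).prodMk ?_
      simpa using ((hasDerivAt_id t).smul_const (ω I)).const_add θ
    exact (hZ (I, θ + t • ω I) ⟨hI, mem_univ _⟩).differentiableAt.hasFDerivAt.comp_hasDerivAt t h1
  -- the action component is constant along the flow
  have hI1 : ∀ I ∈ U, ∀ θ : Vec q, ∀ t : ℝ, (Z (I, θ + t • ω I)).1 = (Z (I, θ)).1 := by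
    intro I hI θ t
    funext k
    have := aux_line (f := fun t : ℝ => (Z (I, θ + t • ω I)).1 k) (v := 0) (fun s => by
      have := hasDerivAt_pi.mp (hderiv I hI θ s).fst k
      simpa using this) t
    simpa using this
  have hI2 : ∀ I ∈ U, ∀ θ : Vec q, ∀ t : ℝ, ∀ k, (Z (I, θ + t • ω I)).2 k
      = (Z (I, θ)).2 k + t * (fderiv ℝ ω I (Z (I, θ)).1) k := by
    intro I hI θ t k
    have := aux_line (f := fun t : ℝ => (Z (I, θ + t • ω I)).2 k)
      (v := (fderiv ℝ ω I (Z (I, θ)).1) k) (fun s => by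
      have := hasDerivAt_pi.mp (hderiv I hI θ s).snd k
      rw [hI1 I hI] at this
      exact this) t
    simpa using this
  have hker : ∀ I ∈ U, ∀ θ : Vec q, fderiv ℝ ω I (Z (I, θ)).1 = 0 := by
    intro I hI θ
    funext k
    obtain ⟨C, hC⟩ := aux_bounded (fun θ => (Z (I, θ)).2 k)
      ((continuous_apply k).comp (continuous_snd.comp (hcont I hI)))
      (fun θ r => by simp only [hper (I, θ) r])
    set v := (fderiv ℝ ω I (Z (I, θ)).1) k with hv
    by_contra hne
    change v ≠ 0 at hne
    have h1 := hC (θ + ((2 * C + 1) / v) • ω I)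
    have h0 := hC θ
    beta_reduce at h1 h0
    rw [hI2 I hI, ← hv, div_mul_cancel₀ _ hne] at h1
    rw [abs_le] at h1 h0
    linarith
  -- the action component vanishes
  have hinj : ∀ᶠ I in nhds Istar, Function.Injective (fderiv ℝ ω I) := by
    have h0 : Function.Injective (fderiv ℝ ω Istar) := by
      have hrn := LinearMap.finrank_range_add_finrank_ker
        ((fderiv ℝ ω Istar) : Vec p →ₗ[ℝ] Vec q)
      rw [hA4] at hrn
      simp only [Module.finrank_fin_fun] at hrn
      have : Module.finrank ℝ (LinearMap.ker ((fderiv ℝ ω Istar) : Vec p →ₗ[ℝ] Vec q)) = 0 := by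
        omega
      rw [Submodule.finrank_eq_zero] at this
      exact LinearMap.ker_eq_bot.mp this
    have hc : ContinuousAt (fderiv ℝ ω) Istar := (hωan Istar hIstar).fderiv.continuousAt
    exact hc.eventually_mem (ContinuousLinearMap.isOpen_injective.mem_nhds h0)
  have hZ1 : ∀ I ∈ U, ∀ θ : Vec q, (Z (I, θ)).1 = 0 := by
    have hpre : IsPreconnected (U ×ˢ (univ : Set (Vec q))) :=
      hUconn.isPreconnected.prod isPreconnected_univ
    have han : AnalyticOnNhd ℝ (fun z => (Z z).1) (U ×ˢ (univ : Set (Vec q))) := by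
      intro z hz
      exact ((ContinuousLinearMap.fst ℝ (Vec p) (Vec q)).analyticAt _).comp (hZ z hz)
    have hev : (fun z => (Z z).1) =ᶠ[nhds (Istar, (0 : Vec q))] 0 := by
      have h1 := hinj.and (hUopen.mem_nhds hIstar)
      have h2 : Filter.Tendsto (Prod.fst : Vec p × Vec q → Vec p) (nhds (Istar, (0 : Vec q)))
        (nhds Istar) := continuous_fst.continuousAt
      filter_upwards [h2.eventually h1] with z hz
      obtain ⟨I, θ⟩ := z
      apply hz.1
      rw [hker I hz.2 θ]
      simp
    have := han.eqOn_zero_of_preconnected_of_eventuallyEq_zero hpre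
      (z₀ := (Istar, (0 : Vec q))) ⟨hIstar, mem_univ _⟩ hev
    exact fun I hI θ => this ⟨hI, mem_univ _⟩
  -- the angle component does not depend on the angle
  obtain ⟨D, hD, hDr⟩ := aux_dense U hUopen hUconn ω hωan hK2
  have hZ2D : ∀ I ∈ U ∩ D, ∀ θ : Vec q, (Z (I, θ)).2 = (Z (I, 0)).2 := by
    intro I hI θ
    funext k
    refine aux_const (fun θ => (Z (I, θ)).2 k)
      ((continuous_apply k).comp (continuous_snd.comp (hcont I hI.1)))
      (fun θ r => by simp only [hper (I, θ) r]) (ω I) (hDr I hI.2 hI.1) ?_ θ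
    intro θ t
    beta_reduce
    rw [hI2 I hI.1, hker I hI.1]
    simp
  have hslice : ∀ θ : Vec q, AnalyticOnNhd ℝ (fun I => (Z (I, θ)).2) U := by
    intro θ I hI
    have h1 : AnalyticAt ℝ (fun I : Vec p => (I, θ)) I := analyticAt_id.prod analyticAt_const
    exact ((ContinuousLinearMap.snd ℝ (Vec p) (Vec q)).analyticAt _).comp
      (AnalyticAt.comp (f := fun I : Vec p => (I, θ)) (hZ (I, θ) ⟨hI, mem_univ _⟩) h1)
  have hZ2 : ∀ I ∈ U, ∀ θ : Vec q, (Z (I, θ)).2 = (Z (I, 0)).2 := by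
    intro I hI θ
    have hcl : U ⊆ closure (U ∩ D) := hD.open_subset_closure_inter hUopen
    have : EqOn (fun I => (Z (I, θ)).2) (fun I => (Z (I, 0)).2) U :=
      Set.EqOn.of_subset_closure (fun I hI => hZ2D I hI θ) (hslice θ).continuousOn
        (hslice 0).continuousOn inter_subset_left hcl
    exact this hI
  exact ⟨fun I => (Z (I, 0)).2, hslice 0, fun I hI θ => Prod.ext (hZ1 I hI θ) (hZ2 I hI θ)⟩

theorem aux_bwd
    (p q : ℕ) (U : Set (Vec p)) (hUopen : IsOpen U)
    (ω : Vec p → Vec q) (hωan : AnalyticOnNhd ℝ ω U)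
    (Z : Vec p × Vec q → Vec p × Vec q)
    (ρ : Vec p → Vec q) (hρ : AnalyticOnNhd ℝ ρ U)
    (hZρ : ∀ I ∈ U, ∀ θ : Vec q, Z (I, θ) = ((0, ρ I) : Vec p × Vec q)) :
    ∀ z ∈ U ×ˢ (univ : Set (Vec q)),
      lieBracket Z (fun w : Vec p × Vec q => ((0, ω w.1) : Vec p × Vec q)) z = 0 := by
  have key : ∀ σ : Vec p → Vec q, AnalyticOnNhd ℝ σ U → ∀ I ∈ U, ∀ θ v : Vec q,
      fderiv ℝ (fun w : Vec p × Vec q => ((0, σ w.1) : Vec p × Vec q)) (I, θ) (0, v) = 0 := by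
    intro σ hσ I hI θ v
    have hd : HasFDerivAt (fun w : Vec p × Vec q => ((0, σ w.1) : Vec p × Vec q))
        ((0 : Vec p × Vec q →L[ℝ] Vec p).prod
          ((fderiv ℝ σ I).comp (ContinuousLinearMap.fst ℝ (Vec p) (Vec q)))) (I, θ) := by
      refine (hasFDerivAt_const _ _).prodMk ?_
      exact HasFDerivAt.comp (I, θ) (hσ I hI).differentiableAt.hasFDerivAt hasFDerivAt_fst
    rw [hd.fderiv]
    simp
  rintro ⟨I, θ⟩ ⟨hI, -⟩
  have hI : I ∈ U := hI
  have hev : Z =ᶠ[nhds (I, θ)] fun w : Vec p × Vec q => ((0, ρ w.1) : Vec p × Vec q) := by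
    filter_upwards [(hUopen.prod isOpen_univ).mem_nhds
      (show (I, θ) ∈ U ×ˢ (univ : Set (Vec q)) from ⟨hI, mem_univ _⟩)] with z hz
    exact hZρ z.1 hz.1 z.2
  unfold lieBracket
  rw [hev.fderiv_eq, hZρ I hI θ, key ω hωan I hI, key ρ hρ I hI, sub_zero]

/-- Lemma 3.5: characterization of the real-analytic vector fields on U × T^q commuting
with X⁰(I,θ) = (0, ω(I)), under (K2) and (A4); in particular X⁰ admits at most q commuting
real-analytic vector fields linearly independent almost everywhere. -/
theorem commuting_fields_characterization
    (p q : ℕ) (hpq : p ≤ q)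
    (U : Set (Vec p)) (hUopen : IsOpen U) (hUconn : IsConnected U)
    (ω : Vec p → Vec q) (hωan : AnalyticOnNhd ℝ ω U)
    -- (K2)
    (hK2 : ∀ r : Fin q → ℤ, (∀ I ∈ U, (∑ i, (r i : ℝ) * ω I i) = 0) → r = 0)
    -- (A4): rank Dω(I*) = p for some I* ∈ U
    (Istar : Vec p) (hIstar : Istar ∈ U)
    (hA4 : Module.finrank ℝ
      (LinearMap.range ((fderiv ℝ ω Istar) : Vec p →ₗ[ℝ] Vec q)) = p) :
    -- a real-analytic vector field Z on U × T^q commutes with X⁰ iff Z = Σ ρ_l(I) ∂/∂θ_l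
    (∀ Z : Vec p × Vec q → Vec p × Vec q,
      AnalyticOnNhd ℝ Z (U ×ˢ (univ : Set (Vec q))) →
      (∀ (z : Vec p × Vec q) (r : Fin q → ℤ),
        Z (z.1, fun i => z.2 i + 2 * π * (r i : ℝ)) = Z z) →
      ((∀ z ∈ U ×ˢ (univ : Set (Vec q)),
          lieBracket Z (fun w : Vec p × Vec q => ((0, ω w.1) : Vec p × Vec q)) z = 0) ↔
        ∃ ρ : Vec p → Vec q, AnalyticOnNhd ℝ ρ U ∧
          ∀ I ∈ U, ∀ θ : Vec q, Z (I, θ) = ((0, ρ I) : Vec p × Vec q))) ∧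
    -- at most q such commuting vector fields can be linearly independent a.e.
    (¬ ∃ Z : Fin (q + 1) → Vec p × Vec q → Vec p × Vec q,
      (∀ j, AnalyticOnNhd ℝ (Z j) (U ×ˢ (univ : Set (Vec q)))) ∧
      (∀ j (z : Vec p × Vec q) (r : Fin q → ℤ),
        Z j (z.1, fun i => z.2 i + 2 * π * (r i : ℝ)) = Z j z) ∧
      (∀ j, ∀ z ∈ U ×ˢ (univ : Set (Vec q)),
        lieBracket (Z j) (fun w : Vec p × Vec q => ((0, ω w.1) : Vec p × Vec q)) z = 0) ∧
      (∀ᵐ z ∂(volume : Measure (Vec p × Vec q)), z ∈ U ×ˢ (univ : Set (Vec q)) →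
        LinearIndependent ℝ fun j => Z j z)) := by
  have hfwd := aux_fwd p q U hUopen hUconn ω hωan hK2 Istar hIstar hA4
  refine ⟨fun Z hZ hper => ⟨hfwd Z hZ hper, ?_⟩, ?_⟩
  · rintro ⟨ρ, hρ, hZρ⟩
    exact aux_bwd p q U hUopen ω hωan Z ρ hρ hZρ
  · rintro ⟨Z, hZ, hper, hbr, hae⟩
    have hd := Measure.dense_of_ae hae
    obtain ⟨z, hzU, hz⟩ := hd.inter_open_nonempty _ (hUopen.prod isOpen_univ)
      ⟨(Istar, (0 : Vec q)), hIstar, mem_univ _⟩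
    have hli : LinearIndependent ℝ fun j => Z j z := hz hzU
    have hli2 : LinearIndependent ℝ fun j => (Z j z).2 := by
      rw [Fintype.linearIndependent_iff] at hli ⊢
      intro g hg
      refine hli g (Prod.ext ?_ ?_)
      · have h0 : ∀ j, (Z j z).1 = 0 := by
          intro j
          obtain ⟨ρ, -, h⟩ := hfwd (Z j) (hZ j) (hper j) (hbr j)
          have := h z.1 hzU.1 z.2
          exact congrArg Prod.fst this
        simp [Prod.fst_sum, h0]
      · simpa [Prod.snd_sum] using hg
    have := hli2.fintype_card_le_finrank
    simp at this
end
end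

section
/- Let Ω be an open subset of ℝ^k and let χ₁,…,χ_m : Ω → ℝ be real-analytic, where k, m ∈ ℕ; write χ = (χ₁,…,χ_m). If the rank of the Jacobian dχ is constant on Ω and strictly less than m, then for every x ∈ Ω there exists a neighborhood V ⊆ Ω of x on which χ₁,…,χ_m are analytically dependent: there exist an open set Ω′ ⊆ ℝ^m and a non-constant real-analytic map ζ : Ω′ → ℝ such that χ(V) ⊆ Ω′ and ζ(χ(y)) = 0 for every y ∈ V. -/
open MeasureTheory Set Real

noncomputable section

/-- Analytic constant rank theorem, in the form needed below: `χ` factors locally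
through `P ∘ χ` by an analytic map. -/
theorem local_factor_of_constant_rank {E F R : Type*}
    [NormedAddCommGroup E] [NormedSpace ℝ E] [FiniteDimensional ℝ E]
    [NormedAddCommGroup F] [NormedSpace ℝ F] [FiniteDimensional ℝ F]
    [NormedAddCommGroup R] [NormedSpace ℝ R] [FiniteDimensional ℝ R]
    (χ : E → F) (x : E) (P : F →L[ℝ] R)
    (han : ∀ᶠ y in nhds x, AnalyticAt ℝ χ y)
    (hrk : ∀ᶠ y in nhds x, Module.finrank ℝ
      (LinearMap.range ((fderiv ℝ χ y) : E →ₗ[ℝ] F)) = Module.finrank ℝ R)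
    (hsurj : (P ∘L fderiv ℝ χ x).range = ⊤) :
    ∃ h : R → F, AnalyticAt ℝ h (P (χ x)) ∧ ∀ᶠ y in nhds x, χ y = h (P (χ y)) := by
  have : CompleteSpace E := FiniteDimensional.complete ℝ E
  have : CompleteSpace F := FiniteDimensional.complete ℝ F
  have : CompleteSpace R := FiniteDimensional.complete ℝ R
  have hanx : AnalyticAt ℝ χ x := han.self_of_nhds
  have hPan : AnalyticAt ℝ (fun y => P (χ y)) x := P.analyticAt _ |>.comp hanx
  have hf : HasStrictFDerivAt (fun y => P (χ y)) (P ∘L fderiv ℝ χ x) x :=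
    P.hasStrictFDerivAt.comp x hanx.hasStrictFDerivAt
  have hker : (P ∘L fderiv ℝ χ x).ker.ClosedComplemented :=
    Submodule.ClosedComplemented.of_finiteDimensional _
  have : CompleteSpace (P ∘L fderiv ℝ χ x).ker := FiniteDimensional.complete ℝ _
  let φ := hf.implicitFunctionDataOfComplemented _ _ hsurj hker
  let e := φ.toOpenPartialHomeomorph
  have hxe : x ∈ e.source := φ.pt_mem_toOpenPartialHomeomorph_source
  have he1 : ∀ y, (e y).1 = P (χ y) := fun y => rfl
  have hean : AnalyticAt ℝ e x := by
    have h2 : AnalyticAt ℝ (fun y => Classical.choose hker (y - x)) x :=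
      (ContinuousLinearMap.analyticAt _ _).comp (analyticAt_id.sub analyticAt_const)
    exact hPan.prod h2
  have hG : AnalyticAt ℝ e.symm (e x) := by
    obtain ⟨p, hp⟩ := hean
    refine (e.hasFPowerSeriesAt_symm hxe hp
      (i := φ.leftDeriv.equivProdOfSurjectiveOfIsCompl φ.rightDeriv φ.range_leftDeriv
        φ.range_rightDeriv φ.isCompl_ker) ?_).analyticAt
    have := hp.hasFDerivAt.unique φ.hasStrictFDerivAt.hasFDerivAt
    rw [← this]
    exact (LinearIsometryEquiv.symm_apply_apply _ _).symm
  have hGx : e.symm (e x) = x := e.left_inv hxe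
  have hGc : Filter.Tendsto e.symm (nhds (e x)) (nhds x) := by
    have := hG.continuousAt
    rwa [ContinuousAt, hGx] at this
  -- good neighbourhood in the target
  have hgood : ∀ᶠ q in nhds (e x), AnalyticAt ℝ e.symm q ∧ AnalyticAt ℝ χ (e.symm q) ∧
      Module.finrank ℝ (LinearMap.range ((fderiv ℝ χ (e.symm q)) : E →ₗ[ℝ] F))
        = Module.finrank ℝ R ∧ q ∈ e.target :=
    hG.eventually_analyticAt.and ((hGc.eventually han).and ((hGc.eventually hrk).and
      (e.open_target.mem_nhds (e.map_source hxe))))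
  obtain ⟨ε, hε, hball⟩ := Metric.eventually_nhds_iff_ball.1 hgood
  -- the second partial derivative vanishes
  have hzero : ∀ q ∈ Metric.ball (e x) ε, ∀ n : (P ∘L fderiv ℝ χ x).ker,
      fderiv ℝ (fun q => χ (e.symm q)) q (0, n) = 0 := by
    intro q hq n
    obtain ⟨h1, h2, h3, h4⟩ := hball q hq
    have hd : HasFDerivAt (fun q => χ (e.symm q))
        ((fderiv ℝ χ (e.symm q)) ∘L (fderiv ℝ e.symm q)) q :=
      h2.differentiableAt.hasFDerivAt.comp q h1.differentiableAt.hasFDerivAt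
    have hPd : HasFDerivAt (fun q => P (χ (e.symm q)))
        (P ∘L ((fderiv ℝ χ (e.symm q)) ∘L (fderiv ℝ e.symm q))) q :=
      P.hasFDerivAt.comp q hd
    have heq : (fun q => P (χ (e.symm q))) =ᶠ[nhds q] Prod.fst := by
      filter_upwards [e.open_target.mem_nhds h4] with r hr
      rw [← he1, e.right_inv hr]
    have hfst : P ∘L ((fderiv ℝ χ (e.symm q)) ∘L (fderiv ℝ e.symm q)) =
        ContinuousLinearMap.fst ℝ R (P ∘L fderiv ℝ χ x).ker :=
      (hPd.congr_of_eventuallyEq heq.symm).unique hasFDerivAt_fst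
    -- `P` is injective on the range of the derivative
    let S := LinearMap.range ((fderiv ℝ χ (e.symm q)) : E →ₗ[ℝ] F)
    let T : S →ₗ[ℝ] R := (P : F →ₗ[ℝ] R) ∘ₗ S.subtype
    have hTs : Function.Surjective T := by
      intro r
      refine ⟨⟨fderiv ℝ χ (e.symm q) (fderiv ℝ e.symm q (r, 0)), ⟨_, rfl⟩⟩, ?_⟩
      exact DFunLike.congr_fun hfst (r, 0)
    have hTi : Function.Injective T :=
      (LinearMap.injective_iff_surjective_of_finrank_eq_finrank h3).2 hTs
    rw [hd.fderiv]
    have hk : T ⟨fderiv ℝ χ (e.symm q) (fderiv ℝ e.symm q (0, n)), ⟨_, rfl⟩⟩ = 0 :=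
      DFunLike.congr_fun hfst (0, n)
    have := hTi (hk.trans (map_zero T).symm)
    exact congrArg Subtype.val this
  refine ⟨fun r => χ (e.symm (r, (e x).2)), ?_, ?_⟩
  · have h1 : AnalyticAt ℝ (fun r : R => (r, (e x).2)) (P (χ x)) :=
      analyticAt_id.prod analyticAt_const
    have h2 : AnalyticAt ℝ (fun q => χ (e.symm q)) (e x) := by
      refine AnalyticAt.comp (g := χ) ?_ hG
      rwa [hGx]
    exact AnalyticAt.comp (g := fun q => χ (e.symm q)) (f := fun r : R => (r, (e x).2)) h2 h1
  · filter_upwards [e.open_source.mem_nhds hxe,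
      (e.continuousAt hxe).eventually (Metric.ball_mem_nhds _ hε)] with y hy hyb
    have hyb : e y ∈ Metric.ball (e x) ε := hyb
    rw [← ball_prod_same, Set.mem_prod] at hyb
    have hin : ∀ n ∈ Metric.ball (e x).2 ε, ((e y).1, n) ∈ Metric.ball (e x) ε := by
      intro n hn
      rw [← ball_prod_same]
      exact ⟨hyb.1, hn⟩
    have hD : ∀ n ∈ Metric.ball (e x).2 ε,
        HasFDerivAt (fun n => χ (e.symm ((e y).1, n)))
          (0 : (P ∘L fderiv ℝ χ x).ker →L[ℝ] F) n := by
      intro n hn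
      obtain ⟨h1, h2, h3, h4⟩ := hball _ (hin n hn)
      have hd : HasFDerivAt (fun q => χ (e.symm q))
          (fderiv ℝ (fun q => χ (e.symm q)) ((e y).1, n)) ((e y).1, n) :=
        (h2.differentiableAt.comp _ h1.differentiableAt).hasFDerivAt
      have := hd.comp n (hasFDerivAt_prodMk_right (𝕜 := ℝ) (e y).1 n)
      refine this.congr_fderiv ?_
      ext v
      exact hzero _ (hin n hn) v
    have hconst := (convex_ball (e x).2 ε).is_const_of_fderivWithin_eq_zero (𝕜 := ℝ)
      (f := fun n => χ (e.symm ((e y).1, n)))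
      (fun n hn => (hD n hn).differentiableAt.differentiableWithinAt)
      (fun n hn => (hD n hn).hasFDerivWithinAt.fderivWithin
        (Metric.isOpen_ball.uniqueDiffWithinAt hn)) hyb.2 (Metric.mem_ball_self hε)
    have : e.symm ((e y).1, (e y).2) = y := e.left_inv hy
    simp only [this] at hconst
    exact hconst

/-- Lemma A.1: real-analytic functions whose Jacobian has constant rank < m are locally
analytically dependent. -/
theorem analytically_dependent_of_constant_rank
    (k m : ℕ)
    (Ω : Set (Vec k)) (hΩopen : IsOpen Ω)
    (χ : Vec k → Vec m) (hχan : AnalyticOnNhd ℝ χ Ω)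
    (m' : ℕ) (hm' : m' < m)
    (hrank : ∀ x ∈ Ω, Module.finrank ℝ
      (LinearMap.range ((fderiv ℝ χ x) : Vec k →ₗ[ℝ] Vec m)) = m') :
    ∀ x ∈ Ω, ∃ V : Set (Vec k), IsOpen V ∧ x ∈ V ∧ V ⊆ Ω ∧
      ∃ (Ω' : Set (Vec m)) (ζ : Vec m → ℝ),
        IsOpen Ω' ∧ AnalyticOnNhd ℝ ζ Ω' ∧
        (∃ y ∈ Ω', ∃ y' ∈ Ω', ζ y ≠ ζ y') ∧
        χ '' V ⊆ Ω' ∧ (∀ y ∈ V, ζ (χ y) = 0) := by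
  intro x hx
  have hnhds : Ω ∈ nhds x := hΩopen.mem_nhds hx
  have hcl : (LinearMap.range ((fderiv ℝ χ x) : Vec k →ₗ[ℝ] Vec m)).ClosedComplemented :=
    Submodule.ClosedComplemented.of_finiteDimensional _
  obtain ⟨P, hP⟩ := hcl
  obtain ⟨h, hh, hfac⟩ := local_factor_of_constant_rank χ x P
    (Filter.mem_of_superset hnhds fun y hy => hχan y hy)
    (Filter.mem_of_superset hnhds fun y hy => (hrank y hy).trans (hrank x hx).symm)
    (by
      rw [eq_top_iff]
      rintro ⟨_, ⟨v, rfl⟩⟩ -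
      exact ⟨v, hP ⟨_, ⟨v, rfl⟩⟩⟩)
  -- a nonzero vector killed by `P`
  obtain ⟨v, hv, hv0⟩ : ∃ v, P v = 0 ∧ v ≠ 0 := by
    have hlt : Module.finrank ℝ (LinearMap.range ((fderiv ℝ χ x) : Vec k →ₗ[ℝ] Vec m)) <
        Module.finrank ℝ (Vec m) := by
      rw [hrank x hx]
      simpa using hm'
    have := LinearMap.ker_ne_bot_of_finrank_lt (f := (P : Vec m →ₗ[ℝ] _)) hlt
    obtain ⟨v, hv, hv0⟩ := Submodule.exists_mem_ne_zero_of_ne_bot this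
    exact ⟨v, hv, hv0⟩
  obtain ⟨i, hi⟩ := Function.ne_iff.1 hv0
  have hWo : IsOpen {r | AnalyticAt ℝ h r} := isOpen_analyticAt ℝ h
  have hΩ' : IsOpen (P ⁻¹' {r | AnalyticAt ℝ h r}) := hWo.preimage P.continuous
  have hev : ∀ᶠ y in nhds x, y ∈ Ω ∧ χ y = h (P (χ y)) ∧
      χ y ∈ P ⁻¹' {r | AnalyticAt ℝ h r} :=
    Filter.Eventually.and hnhds (hfac.and
      ((hχan x hx).continuousAt.eventually (hΩ'.mem_nhds hh)))
  obtain ⟨V, hV, hVo, hxV⟩ := eventually_nhds_iff.1 hev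
  refine ⟨V, hVo, hxV, fun y hy => (hV y hy).1, P ⁻¹' {r | AnalyticAt ℝ h r},
    fun z => z i - h (P z) i, hΩ', ?_, ⟨χ x, hh, χ x + v, ?_, ?_⟩, ?_, ?_⟩
  · intro z hz
    have h1 : AnalyticAt ℝ (fun z => h (P z)) z :=
      AnalyticAt.comp (g := h) hz (P.analyticAt z)
    have hpr : ∀ w : Vec m, AnalyticAt ℝ (fun u : Vec m => u i) w := fun w =>
      (ContinuousLinearMap.proj (R := ℝ) (φ := fun _ : Fin m => ℝ) i).analyticAt w
    exact (hpr z).sub ((hpr _).comp h1)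
  · simpa [hv] using hh
  · simp only [map_add, hv, add_zero, Pi.add_apply]
    intro hc
    apply hi
    simp only [Pi.zero_apply]
    linarith
  · rintro _ ⟨y, hy, rfl⟩
    exact (hV y hy).2.2
  · intro y hy
    show χ y i - h (P (χ y)) i = 0
    rw [← (hV y hy).2.1, sub_self]
end
end

section
/- Let ℓ ≥ 2 and let K ⊆ ℝ be a set having an accumulation point. Define D = {I ∈ ℝ^ℓ : there exist i, j ∈ {1,…,ℓ} with i ≠ j and c ∈ K such that I_j = c·I_i}. Then D is a key set for C^ω(ℝ^ℓ): every real-analytic function f : ℝ^ℓ → ℝ that vanishes at every point of D vanishes identically on ℝ^ℓ. -/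
open MeasureTheory Set Real

noncomputable section

/-- An analytic function on ℝ^ℓ restricted to a line vanishes if it does so frequently near
a point. -/
theorem line_vanish {ℓ : ℕ} {f : (Fin ℓ → ℝ) → ℝ} (hf : AnalyticOnNhd ℝ f univ)
    (a v : Fin ℓ → ℝ) (S : Set ℝ) (x : ℝ) (hx : AccPt x (Filter.principal S))
    (h : ∀ t ∈ S, f (a + t • v) = 0) (t : ℝ) : f (a + t • v) = 0 := by
  have hg : AnalyticOnNhd ℝ (fun t : ℝ => f (a + t • v)) univ := by
    intro t _
    have h1 : AnalyticAt ℝ (fun t : ℝ => a + t • v) t :=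
      analyticAt_const.add (analyticAt_id.smul analyticAt_const)
    exact AnalyticAt.fun_comp (g := f) (f := fun t : ℝ => a + t • v) (hf _ (mem_univ _)) h1
  have h0 : AnalyticOnNhd ℝ (fun _ : ℝ => (0 : ℝ)) univ := fun _ _ => analyticAt_const
  have := hg.eq_of_frequently_eq h0 ((accPt_iff_frequently_nhdsNE.1 hx).mono h)
  exact congrFun this t

/-- The set D = {I ∈ ℝ^ℓ : I_j = c I_i for some i ≠ j and c ∈ K}, for K ⊆ ℝ with an
accumulation point, is a key set for C^ω(ℝ^ℓ). -/
theorem keySet_of_accumulation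
    (ℓ : ℕ) (hℓ : 2 ≤ ℓ)
    (K : Set ℝ) (hK : ∃ x : ℝ, AccPt x (Filter.principal K)) :
    ∀ f : (Fin ℓ → ℝ) → ℝ, AnalyticOnNhd ℝ f univ →
      (∀ I : Fin ℓ → ℝ, (∃ i j : Fin ℓ, i ≠ j ∧ ∃ c ∈ K, I j = c * I i) → f I = 0) →
      ∀ I : Fin ℓ → ℝ, f I = 0 := by
  intro f hf hD
  obtain ⟨x, hx⟩ := hK
  let i : Fin ℓ := ⟨0, by omega⟩
  let j : Fin ℓ := ⟨1, by omega⟩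
  have hij : i ≠ j := by simp [i, j]
  have key : ∀ I : Fin ℓ → ℝ, I i ≠ 0 → f I = 0 := by
    intro I hI
    have := line_vanish hf (I - Pi.single j (I j)) (Pi.single j (I i)) K x hx
      (fun t ht => hD _ ⟨i, j, hij, t, ht, by simp [hij]⟩) (I j / I i)
    convert this using 2
    ext k
    by_cases hk : k = j
    · subst hk; simp [hI]
    · simp [hk]
  intro I
  by_cases hI : I i = 0
  · have := line_vanish hf I (Pi.single i 1) {0}ᶜ 0 (by
      rw [accPt_iff_frequently_nhdsNE]
      exact Filter.Eventually.frequently self_mem_nhdsWithin)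
      (fun t ht => key _ (by simpa [hI] using ht)) 0
    simpa using this
  · exact key I hI
end
end
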